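/- arXiv:1404.0999 — 3 statements merged into one kernel-verified Lean document; each statement's English description precedes it below -/
import Mathlib

section
/- Let S and S' be Polish spaces and let f : S → S' be a Borel measurable map such that the fiber f⁻¹({y}) is compact for every y ∈ S'. Then for every closed set A ⊂ S, the image f(A) is a Borel subset of S'. -/
/-!
Embed `S` in the Hilbert cube `Q` by `e`. The image of `A` under `x ↦ (f x, e x)` is a Borel subset
of `S' × Q` with compact sections, and `f '' A` is its projection to `S'`. Its complement has open
sections, hence by the Kunugui–Novikov theorem is a countable union of rectangles `D n ×ˢ V n` with
`D n` Borel and `V n` open. By compactness of `Q`, a point lies outside the projection iff it lies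
in `⋂ n ∈ F, D n` for one of the countably many finite `F` for which the `V n`, `n ∈ F`, cover `Q`.
-/

open Set Function Filter Topology MeasureTheory

/-- A family of sets that can be enlarged to measurable sets with empty intersection: the
generalization of `MeasureTheory.MeasurablySeparable` from pairs to families that appears in
Novikov's separation theorem. -/
def MeasurablySeparableFamily {ι X : Type*} [MeasurableSpace X] (A : ι → Set X) : Prop :=
  ∃ B : ι → Set X, (∀ i, A i ⊆ B i) ∧ (∀ i, MeasurableSet (B i)) ∧ ⋂ i, B i = ∅

namespace MeasurablySeparableFamily

variable {ι X : Type*} [MeasurableSpace X] {A : ι → Set X}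

theorem of_measurablySeparable {i j : ι} (h : MeasurablySeparable (A i) (A j)) :
    MeasurablySeparableFamily A := by
  obtain ⟨u, hiu, hju, hu⟩ := h
  refine ⟨fun k ↦ (⋂ _ : k = i, u) ∩ ⋂ _ : k = j, uᶜ, fun k ↦ ?_, fun k ↦ ?_, ?_⟩
  · refine subset_inter (subset_iInter ?_) (subset_iInter ?_)
    · rintro rfl
      exact hiu
    · rintro rfl
      exact hju.subset_compl_right
  · exact .inter (.iInter fun _ ↦ hu) (.iInter fun _ ↦ hu.compl)
  · refine eq_empty_of_forall_notMem fun x hx ↦ ?_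
    rw [mem_iInter] at hx
    exact mem_iInter.1 (hx j).2 rfl (mem_iInter.1 (hx i).1 rfl)

theorem of_subset_iUnion [DecidableEq ι] {β : Type*} [Countable β] {i : ι} {C : β → Set X}
    (hC : A i ⊆ ⋃ b, C b) (h : ∀ b, MeasurablySeparableFamily (update A i (C b))) :
    MeasurablySeparableFamily A := by
  choose B hAB hB hempty using h
  replace hAB b := (forall_update_iff A fun j s ↦ s ⊆ B b j).1 (hAB b)
  refine ⟨update (fun j ↦ ⋂ b, B b j) i (⋃ b, B b i), ?_, ?_, ?_⟩
  · rw [forall_update_iff _ fun j s ↦ A j ⊆ s]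
    exact ⟨hC.trans (iUnion_mono fun b ↦ (hAB b).1),
      fun j hj ↦ subset_iInter fun b ↦ (hAB b).2 j hj⟩
  · rw [forall_update_iff _ fun _ s ↦ MeasurableSet s]
    exact ⟨.iUnion fun b ↦ hB b i, fun j _ ↦ .iInter fun b ↦ hB b j⟩
  · refine eq_empty_of_forall_notMem fun x hx ↦ ?_
    rw [mem_iInter, forall_update_iff _ fun _ s ↦ x ∈ s] at hx
    obtain ⟨b, hb⟩ := mem_iUnion.1 hx.1
    have hxB : x ∈ ⋂ j, B b j := mem_iInter.2 fun j ↦ by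
      obtain rfl | hj := eq_or_ne j i
      exacts [hb, mem_iInter.1 (hx.2 j hj) b]
    exact notMem_empty x (hempty b ▸ hxB)

end MeasurablySeparableFamily

section Novikov

variable {ι X : Type*} [MeasurableSpace X]

theorem exists_subset_not_measurablySeparableFamily {κ β : Type*} [Countable β]
    {f : ι → (κ → β) → X} {C : ι → Set (κ → β)}
    (hC : ¬MeasurablySeparableFamily fun i ↦ f i '' C i) (i : ι) (m : κ) :
    ∃ b, ∃ C' ≤ C, (∀ y ∈ C' i, y m = b) ∧ ¬MeasurablySeparableFamily fun i ↦ f i '' C' i := by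
  classical
  have hcover : f i '' C i ⊆ ⋃ b, f i '' (C i ∩ {y | y m = b}) := by
    rintro _ ⟨y, hy, rfl⟩
    exact mem_iUnion.2 ⟨y m, y, ⟨hy, rfl⟩, rfl⟩
  obtain ⟨b, hb⟩ := not_forall.1 fun h ↦
    hC (MeasurablySeparableFamily.of_subset_iUnion (i := i) hcover h)
  refine ⟨b, update C i (C i ∩ {y | y m = b}), update_le_self_iff.2 inter_subset_left, ?_, ?_⟩
  · rw [update_self]
    exact fun y hy ↦ hy.2
  · convert hb using 2
    ext j : 1
    exact apply_update (fun j ↦ image (f j)) C i _ j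

theorem exists_seq_not_measurablySeparableFamily {κ β : Type*} [Countable β]
    {f : ι → (κ → β) → X} (h : ¬MeasurablySeparableFamily fun i ↦ range (f i))
    (p : ℕ → ι × κ) :
    ∃ (C : ℕ → ι → Set (κ → β)) (v : ℕ → β), Antitone C ∧
      (∀ n, ∀ y ∈ C (n + 1) (p n).1, y (p n).2 = v n) ∧
      ∀ n, ¬MeasurablySeparableFamily fun i ↦ f i '' C n i := by
  choose b next hle hb hnext using
    fun (C : {C : ι → Set (κ → β) // ¬MeasurablySeparableFamily fun i ↦ f i '' C i}) (n : ℕ) ↦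
      exists_subset_not_measurablySeparableFamily C.2 (p n).1 (p n).2
  let C (n : ℕ) : {C : ι → Set (κ → β) // ¬MeasurablySeparableFamily fun i ↦ f i '' C i} :=
    n.rec ⟨fun _ ↦ univ, by simpa only [image_univ] using h⟩ fun n D ↦ ⟨next D n, hnext D n⟩
  exact ⟨fun n ↦ (C n).1, fun n ↦ b (C n) n, antitone_nat_of_succ_le fun n ↦ hle (C n) n,
    fun n ↦ hb (C n) n, fun n ↦ (C n).2⟩

theorem tendsto_smallSets_nhds_pi {α κ : Type*} {Z : κ → Type*} [∀ m, TopologicalSpace (Z m)]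
    {l : Filter α} {C : α → Set (∀ m, Z m)} {z : ∀ m, Z m}
    (h : ∀ m, ∀ᶠ a in l, ∀ y ∈ C a, y m = z m) : Tendsto C l (𝓝 z).smallSets := by
  rw [tendsto_smallSets_iff]
  intro U hU
  rw [nhds_pi, Filter.mem_pi] at hU
  obtain ⟨I, hI, t, ht, htU⟩ := hU
  filter_upwards [(eventually_all_finite hI).2 fun m _ ↦ h m] with a ha y hy
  exact htU fun m hm ↦ ha m hm y hy ▸ mem_of_mem_nhds (ht m)

variable [Countable ι] [TopologicalSpace X] [T2Space X] [OpensMeasurableSpace X]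

theorem measurablySeparableFamily_range_of_iInter_eq_empty {f : ι → (ℕ → ℕ) → X}
    (hf : ∀ i, Continuous (f i)) (hempty : ⋂ i, range (f i) = ∅) :
    MeasurablySeparableFamily fun i ↦ range (f i) := by
  -- Fixing one coordinate at a time keeps the images inseparable while shrinking the domains to
  -- points `z i`; but if `f i (z i) ≠ f j (z j)`, disjoint open sets eventually separate them.
  by_contra hsep
  obtain _ | _ := isEmpty_or_nonempty ι
  · exact hsep ⟨fun i ↦ range (f i), fun _ ↦ Subset.rfl, isEmptyElim, hempty⟩
  obtain ⟨p, hp⟩ := exists_surjective_nat (ι × ℕ)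
  obtain ⟨C, v, hC, hv, hCsep⟩ := exists_seq_not_measurablySeparableFamily hsep p
  choose k hk using fun i m ↦ hp (i, m)
  let z (i : ι) (m : ℕ) : ℕ := v (k i m)
  have hCz (i : ι) : Tendsto (C · i) atTop (𝓝 (z i)).smallSets := by
    refine tendsto_smallSets_nhds_pi fun m ↦ ?_
    filter_upwards [eventually_ge_atTop (k i m + 1)] with n hn y hy
    have hvk := hv (k i m)
    rw [hk] at hvk
    exact hvk y (hC hn i hy)
  have hfC (i : ι) : ∀ U ∈ 𝓝 (f i (z i)), ∀ᶠ n in atTop, f i '' C n i ⊆ U :=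
    tendsto_smallSets_iff.1 (((hf i).tendsto (z i)).image_smallSets.comp (hCz i))
  obtain ⟨i, j, hij⟩ : ∃ i j, f i (z i) ≠ f j (z j) := by
    by_contra! heq
    let i₀ := Classical.arbitrary ι
    exact (hempty ▸ notMem_empty (f i₀ (z i₀))) (mem_iInter.2 fun i ↦ ⟨z i, heq i i₀⟩)
  obtain ⟨U, V, hU, hV, hiU, hjV, hUV⟩ := t2_separation hij
  obtain ⟨n, hnU, hnV⟩ :=
    ((hfC i U (hU.mem_nhds hiU)).and (hfC j V (hV.mem_nhds hjV))).exists
  exact hCsep n (.of_measurablySeparable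
    ⟨U, hnU, hUV.symm.mono_left hnV, hU.measurableSet⟩)

/-- **Novikov's separation theorem**. -/
theorem measurablySeparableFamily_of_analyticSet {A : ι → Set X} (hA : ∀ i, AnalyticSet (A i))
    (hempty : ⋂ i, A i = ∅) : MeasurablySeparableFamily A := by
  by_cases h : ∃ i, A i = ∅
  · obtain ⟨i, hi⟩ := h
    refine .of_measurablySeparable (i := i) (j := i) ?_
    rw [hi]
    exact ⟨∅, Subset.rfl, disjoint_empty ∅, .empty⟩
  · simp only [AnalyticSet] at hA
    choose f hf hfA using fun i ↦ (hA i).resolve_left (not_exists.1 h i)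
    obtain rfl : (fun i ↦ range (f i)) = A := funext hfA
    exact measurablySeparableFamily_range_of_iInter_eq_empty hf hempty

end Novikov

theorem analyticSet_union {X : Type*} [TopologicalSpace X] {s t : Set X} (hs : AnalyticSet s)
    (ht : AnalyticSet t) : AnalyticSet (s ∪ t) := by
  rw [union_eq_iUnion]
  exact .iUnion (Bool.forall_bool.2 ⟨ht, hs⟩)

theorem exists_measurableSet_subset_of_subset_iUnion {ι X : Type*} [Countable ι]
    [TopologicalSpace X] [T2Space X] [MeasurableSpace X] [OpensMeasurableSpace X] {s : Set X}
    {Z : ι → Set X} (hs : AnalyticSet s) (hZ : ∀ i, AnalyticSet (Z i)ᶜ) (hsZ : s ⊆ ⋃ i, Z i) :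
    ∃ E : ι → Set X, (∀ i, MeasurableSet (E i)) ∧ (∀ i, E i ⊆ Z i) ∧ s ⊆ ⋃ i, E i := by
  have hempty : ⋂ o : Option ι, o.elim s (fun i ↦ (Z i)ᶜ) = ∅ := by
    simp only [iInter_option, Option.elim, ← compl_iUnion]
    exact (disjoint_compl_right.mono_left hsZ).inter_eq
  obtain ⟨W, hW, hWmeas, hWempty⟩ :=
    measurablySeparableFamily_of_analyticSet (Option.forall.2 ⟨hs, hZ⟩) hempty
  rw [iInter_option] at hWempty
  refine ⟨fun i ↦ (W (some i))ᶜ, fun i ↦ (hWmeas _).compl,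
    fun i ↦ compl_subset_comm.1 (hW (some i)), (hW none).trans ?_⟩
  rw [← compl_iInter]
  exact (disjoint_iff_inter_eq_empty.2 hWempty).subset_compl_right

theorem exists_measurableSet_image_fst_subset_of_subset_prod {Y Q : Type*} [TopologicalSpace Y]
    [T2Space Y] [SecondCountableTopology Y] [MeasurableSpace Y] [StandardBorelSpace Y]
    [OpensMeasurableSpace Y] [MeasurableSpace Q] [StandardBorelSpace Q] {E : Set (Y × Q)}
    {C : Set Y} {V : Set Q} (hE : MeasurableSet E) (hC : AnalyticSet Cᶜ) (hEC : E ⊆ C ×ˢ V) :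
    ∃ D, MeasurableSet D ∧ D ⊆ C ∧ E ⊆ D ×ˢ V := by
  have hdisj : Disjoint (Prod.fst '' E) Cᶜ :=
    disjoint_compl_right.mono_left (image_subset_iff.2 fun p hp ↦ (hEC hp).1)
  obtain ⟨D, hED, hCD, hD⟩ := (hE.analyticSet_image measurable_fst).measurablySeparable hC hdisj
  exact ⟨D, hD, disjoint_compl_left_iff_subset.1 hCD,
    fun p hp ↦ ⟨hED (mem_image_of_mem _ hp), (hEC hp).2⟩⟩

section Projection

variable {Y Q ι : Type*} [MeasurableSpace Y] [TopologicalSpace Q]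

/-- The **Kunugui–Novikov theorem**. -/
theorem exists_measurableSet_eq_iUnion_prod [StandardBorelSpace Y] [PolishSpace Q]
    [MeasurableSpace Q] [BorelSpace Q] [Countable ι] {V : ι → Set Q}
    (hV : TopologicalSpace.IsTopologicalBasis (range V)) {U : Set (Y × Q)} (hU : MeasurableSet U)
    (hopen : ∀ y, IsOpen (Prod.mk y ⁻¹' U)) :
    ∃ D : ι → Set Y, (∀ i, MeasurableSet (D i)) ∧ U = ⋃ i, D i ×ˢ V i := by
  let := upgradeStandardBorel Y
  have hVmeas (i : ι) : MeasurableSet (V i) := (hV.isOpen ⟨i, rfl⟩).measurableSet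
  let C (i : ι) : Set Y := {y | V i ⊆ Prod.mk y ⁻¹' U}
  have hC (i : ι) : AnalyticSet (C i)ᶜ := by
    have hCeq : (C i)ᶜ = Prod.fst '' (Uᶜ ∩ Prod.snd ⁻¹' V i) := by
      ext y
      simp [C, not_subset, and_comm]
    rw [hCeq]
    exact (hU.compl.inter (measurable_snd (hVmeas i))).analyticSet_image measurable_fst
  have hCV (i : ι) : AnalyticSet (C i ×ˢ V i)ᶜ := by
    rw [compl_prod_eq_union, prod_univ, univ_prod]
    exact analyticSet_union ((hC i).preimage continuous_fst)
      (measurable_snd (hVmeas i).compl).analyticSet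
  have hUC : U ⊆ ⋃ i, C i ×ˢ V i := by
    rintro ⟨y, q⟩ hyq
    obtain ⟨_, ⟨i, rfl⟩, hqi, hi⟩ :=
      hV.exists_subset_of_mem_open (u := Prod.mk y ⁻¹' U) hyq (hopen y)
    exact mem_iUnion.2 ⟨i, hi, hqi⟩
  obtain ⟨E, hE, hEC, hUE⟩ :=
    exists_measurableSet_subset_of_subset_iUnion hU.analyticSet hCV hUC
  choose D hD hDC hED using fun i ↦
    exists_measurableSet_image_fst_subset_of_subset_prod (hE i) (hC i) (hEC i)
  refine ⟨D, hD, (hUE.trans (iUnion_mono hED)).antisymm (iUnion_subset fun i ↦ ?_)⟩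
  rintro ⟨y, q⟩ ⟨hy, hq⟩
  exact hDC i hy hq

theorem measurableSet_setOfPred_forall_mem_iUnion_prod [CompactSpace Q] [Countable ι]
    {D : ι → Set Y} {V : ι → Set Q} (hD : ∀ i, MeasurableSet (D i)) (hV : ∀ i, IsOpen (V i)) :
    MeasurableSet {y | ∀ q, (y, q) ∈ ⋃ i, D i ×ˢ V i} := by
  have hfinite : {y | ∀ q, (y, q) ∈ ⋃ i, D i ×ˢ V i} =
      ⋃ F ∈ {F : Set ι | F.Finite ∧ univ ⊆ ⋃ i ∈ F, V i}, ⋂ i ∈ F, D i := by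
    ext y
    rw [mem_iUnion₂]
    constructor
    · intro hy
      have hcover : univ ⊆ ⋃ i ∈ {i | y ∈ D i}, V i := fun q _ ↦ by
        obtain ⟨i, hyi, hqi⟩ := mem_iUnion.1 (hy q)
        exact mem_biUnion hyi hqi
      obtain ⟨F, hFD, hF, hFcover⟩ :=
        isCompact_univ.elim_finite_subcover_image (fun i _ ↦ hV i) hcover
      exact ⟨F, ⟨hF, hFcover⟩, mem_iInter₂.2 hFD⟩
    · rintro ⟨F, ⟨_, hFcover⟩, hFD⟩ q
      obtain ⟨i, hi, hqi⟩ := mem_iUnion₂.1 (hFcover (mem_univ q))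
      exact mem_iUnion.2 ⟨i, mem_iInter₂.1 hFD i hi, hqi⟩
  rw [hfinite]
  exact .biUnion (Countable.ofPred_finite.mono fun F hF ↦ hF.1)
    fun F _ ↦ .biInter F.to_countable fun i _ ↦ hD i

theorem measurableSet_image_fst_of_isClosed_sections [StandardBorelSpace Y] [PolishSpace Q]
    [CompactSpace Q] [MeasurableSpace Q] [BorelSpace Q] {B : Set (Y × Q)} (hB : MeasurableSet B)
    (hclosed : ∀ y, IsClosed (Prod.mk y ⁻¹' B)) : MeasurableSet (Prod.fst '' B) := by
  obtain ⟨V, hV⟩ := TopologicalSpace.exists_seq_basis Q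
  obtain ⟨D, hD, hBD⟩ :=
    exists_measurableSet_eq_iUnion_prod hV hB.compl fun y ↦ (hclosed y).isOpen_compl
  have hcompl : (Prod.fst '' B)ᶜ = {y | ∀ q, (y, q) ∈ ⋃ n, D n ×ˢ V n} := by
    rw [← hBD]
    ext y
    simp
  rw [← MeasurableSet.compl_iff, hcompl]
  exact measurableSet_setOfPred_forall_mem_iUnion_prod hD fun n ↦ hV.isOpen ⟨n, rfl⟩

end Projection

section Image

variable {S S' : Type*} [TopologicalSpace S] [TopologicalSpace.MetrizableSpace S]
  [SecondCountableTopology S] [MeasurableSpace S] [OpensMeasurableSpace S] [StandardBorelSpace S]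
  [MeasurableSpace S'] {f : S → S'} {A : Set S}

theorem measurableSet_image_of_isCompact_inter_fiber [StandardBorelSpace S'] (hf : Measurable f)
    (hA : MeasurableSet A) (hcompact : ∀ y, IsCompact (A ∩ f ⁻¹' {y})) :
    MeasurableSet (f '' A) := by
  obtain ⟨e, he⟩ : ∃ e : S → ℕ → unitInterval, IsEmbedding e := by
    let := TopologicalSpace.metrizableSpaceMetric S
    exact Metric.PiNatEmbed.exists_embedding_to_hilbert_cube
  let g (x : S) : S' × (ℕ → unitInterval) := (f x, e x)
  have hgA : MeasurableSet (g '' A) :=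
    hA.image_of_measurable_injOn (hf.prodMk he.continuous.measurable)
      (Injective.of_comp (f := Prod.snd) (g := g) he.injective).injOn
  have hsection (y : S') : Prod.mk y ⁻¹' (g '' A) = e '' (A ∩ f ⁻¹' {y}) := by
    ext q
    simp [g, and_assoc]
  have hproj : MeasurableSet (Prod.fst '' (g '' A)) :=
    measurableSet_image_fst_of_isClosed_sections hgA fun y ↦
      hsection y ▸ ((hcompact y).image he.continuous).isClosed
  rwa [image_image] at hproj

theorem borel_image_of_closed_of_compact_fibers_general [MeasurableSpace.CountablySeparated S']
    (hf : Measurable f) (hA : MeasurableSet A) (hcompact : ∀ y, IsCompact (A ∩ f ⁻¹' {y})) :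
    MeasurableSet (f '' A) := by
  obtain ⟨i, hi, hinj⟩ := MeasurableSpace.measurable_injection_nat_bool_of_countablySeparated S'
  have hcompact' (z : ℕ → Bool) : IsCompact (A ∩ (i ∘ f) ⁻¹' {z}) := by
    by_cases hz : z ∈ range i
    · obtain ⟨y, rfl⟩ := hz
      rw [preimage_comp, ← image_singleton, hinj.preimage_image]
      exact hcompact y
    · rw [preimage_comp, preimage_singleton_eq_empty.2 hz, preimage_empty, inter_empty]
      exact isCompact_empty
  have himage := measurableSet_image_of_isCompact_inter_fiber (hi.comp hf) hA hcompact'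
  rw [image_comp] at himage
  exact hinj.preimage_image (f '' A) ▸ hi himage

end Image

/-- A Borel map between Polish spaces with compact fibers maps closed sets to
Borel sets. -/
theorem borel_image_of_closed_of_compact_fibers
    {S S' : Type} [TopologicalSpace S] [PolishSpace S]
    [MeasurableSpace S] [BorelSpace S]
    [TopologicalSpace S'] [PolishSpace S']
    [MeasurableSpace S'] [BorelSpace S']
    (f : S → S') (hf : Measurable f)
    (hfib : ∀ y : S', IsCompact (f ⁻¹' {y})) :
    ∀ A : Set S, IsClosed A → MeasurableSet (f '' A) :=
  fun _ hA ↦ borel_image_of_closed_of_compact_fibers_general hf hA.measurableSet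
    fun y ↦ (hfib y).inter_left hA
end

section
/- Let S be a measurable space, let P and Q be probability kernels from S to ℝ^d with finite first moments, and let c : ℝ^d × ℝ^d → ℝ ∪ {+∞} be lower semicontinuous and satisfy c(x, y) ≥ −C(1 + ‖x‖ + ‖y‖) for all x, y and some finite constant C. Then there exists a probability kernel γ* from S to ℝ^d × ℝ^d such that for every θ ∈ S, γ*_θ is a coupling of P_θ and Q_θ and ∫ c dγ*_θ ≤ ∫ c dμ for every coupling μ of P_θ and Q_θ (the integrals, taken in (−∞, +∞], are well defined by the lower bound on c and the finite first moments). -/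
open MeasureTheory ProbabilityTheory Filter

noncomputable section

abbrev Euc (d : ℕ) : Type := EuclideanSpace ℝ (Fin d)

def FiniteFirstMoment {d : ℕ} (μ : Measure (Euc d)) : Prop :=
  Integrable (fun x => x) μ

def ConvexOrder {d : ℕ} (μ ν : Measure (Euc d)) : Prop :=
  ∀ φ : Euc d → ℝ, ConvexOn ℝ Set.univ φ → Integrable φ μ → Integrable φ ν →
    ∫ x, φ x ∂μ ≤ ∫ x, φ x ∂ν

def CoordMono {d : ℕ} (φ : Euc d → ℝ) : Prop :=
  ∀ x y : Euc d, (∀ i, x i ≤ y i) → φ x ≤ φ y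

def IncConvexOrder {d : ℕ} (μ ν : Measure (Euc d)) : Prop :=
  ∀ φ : Euc d → ℝ, ConvexOn ℝ Set.univ φ → CoordMono φ → Integrable φ μ → Integrable φ ν →
    ∫ x, φ x ∂μ ≤ ∫ x, φ x ∂ν

def IsCoupling {d : ℕ} (lam : Measure (Euc d × Euc d)) (μ ν : Measure (Euc d)) : Prop :=
  lam.map Prod.fst = μ ∧ lam.map Prod.snd = ν

def fstSigma (d : ℕ) : MeasurableSpace (Euc d × Euc d) :=
  MeasurableSpace.comap Prod.fst inferInstance

def IsMartingaleCoupling {d : ℕ} (lam : Measure (Euc d × Euc d)) : Prop :=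
  lam[(fun p : Euc d × Euc d => p.2) | fstSigma d] =ᵐ[lam] (fun p => p.1)

def IsSubmartingaleCoupling {d : ℕ} (lam : Measure (Euc d × Euc d)) : Prop :=
  ∀ᵐ p ∂lam, ∀ i, p.1 i ≤ (lam[(fun q : Euc d × Euc d => q.2) | fstSigma d]) p i

/-- Auxiliary conversion of an extended real to `ℝ≥0∞` (negative values go to 0). -/
def erealToENNReal (x : EReal) : ENNReal :=
  if x = ⊤ then ⊤ else ENNReal.ofReal x.toReal

/-- The transport cost ∫ c dμ, with values in `EReal`.  Under the standing lower
bound `c(x,y) ≥ −C(1 + ‖x‖ + ‖y‖)` and finite first moments of the marginals, the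
shifted integrand is nonnegative and this quantity is exactly the well-defined
integral of `c` with values in `(−∞, +∞]`. -/
def ECost {d : ℕ} (c : Euc d × Euc d → EReal) (C : ℝ)
    (μ : Measure (Euc d × Euc d)) : EReal :=
  ((∫⁻ p, erealToENNReal (c p + ((C * (1 + ‖p.1‖ + ‖p.2‖) : ℝ) : EReal)) ∂μ : ENNReal) : EReal)
    - ((∫ p, C * (1 + ‖p.1‖ + ‖p.2‖) ∂μ : ℝ) : EReal)

open scoped Topology ENNReal NNReal

/-!
Couplings of `P θ` and `Q θ` form a fibre of the map sending a probability measure on the product to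
its pair of marginals. This map is continuous and, by Prokhorov's theorem, proper, so its fibres are
compact and depend measurably on `θ`. The transport cost is lower semicontinuous for weak
convergence, hence the optimal couplings again form a measurable compact-valued multifunction, and
such a multifunction has a measurable selection. The selection is a kernel because the Giry
σ-algebra is the Borel σ-algebra of weak convergence. Adding an integrable function
`a x + b y` to the cost, whose integral depends on the marginals only, reduces to nonnegative costs.
-/

/-- `K` with the points of `U` removed, unless nothing would remain. -/
def avoiding {Z : Type*} (U K : Set Z) : Set Z :=
  {z ∈ K | z ∈ U → K ⊆ U}

lemma avoiding_inter_nonempty_iff {Z : Type*} {U K F : Set Z} :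
    (avoiding U K ∩ F).Nonempty ↔ (K ∩ (F ∩ Uᶜ)).Nonempty ∨ K ⊆ U ∧ (K ∩ F).Nonempty := by
  constructor
  · rintro ⟨z, ⟨hzK, hz⟩, hzF⟩
    by_cases hzU : z ∈ U
    · exact .inr ⟨hz hzU, z, hzK, hzF⟩
    · exact .inl ⟨z, hzK, hzF, hzU⟩
  · rintro (⟨z, hzK, hzF, hzU⟩ | ⟨hKU, z, hzK, hzF⟩)
    · exact ⟨z, ⟨hzK, fun h => absurd h hzU⟩, hzF⟩
    · exact ⟨z, ⟨hzK, fun _ => hKU⟩, hzF⟩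

/-- The sets obtained from `K` by avoiding `U 0`, `U 1`, ... in turn. -/
def avoidingSeq {Z : Type*} (U : ℕ → Set Z) (K : Set Z) : ℕ → Set Z
  | 0 => K
  | n + 1 => avoiding (U n) (avoidingSeq U K n)

lemma mem_iff_avoidingSeq_subset {Z : Type*} {U : ℕ → Set Z} {K : Set Z} {z : Z}
    (hz : ∀ n, z ∈ avoidingSeq U K n) (n : ℕ) : z ∈ U n ↔ avoidingSeq U K n ⊆ U n :=
  ⟨(hz (n + 1)).2, fun h => h (hz n)⟩

section MeasurableMultifunction

variable {S Z : Type*} [MeasurableSpace S] [TopologicalSpace Z]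

/-- A measurable multifunction with nonempty compact values; measurability means that every closed
set is hit on a measurable set of parameters. -/
structure IsMeasurableMultifunction (K : S → Set Z) : Prop where
  isCompact : ∀ θ, IsCompact (K θ)
  nonempty : ∀ θ, (K θ).Nonempty
  measurableSet_hits : ∀ F, IsClosed F → MeasurableSet {θ | (K θ ∩ F).Nonempty}

lemma IsMeasurableMultifunction.measurableSet_subset {K : S → Set Z}
    (hK : IsMeasurableMultifunction K) {U : Set Z} (hU : IsOpen U) :
    MeasurableSet {θ | K θ ⊆ U} := by
  convert (hK.measurableSet_hits Uᶜ hU.isClosed_compl).compl using 1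
  ext θ
  simp [Set.inter_compl_nonempty_iff]

lemma isMeasurableMultifunction_fiber {B : Type*} [TopologicalSpace B] [MeasurableSpace B]
    [OpensMeasurableSpace B] {p : Z → B} (hp : IsProperMap p)
    (hsurj : Function.Surjective p) {Ψ : S → B} (hΨ : Measurable Ψ) :
    IsMeasurableMultifunction (fun θ => p ⁻¹' {Ψ θ}) where
  isCompact θ := hp.isCompact_preimage isCompact_singleton
  nonempty θ := hsurj (Ψ θ)
  measurableSet_hits F hF := by
    convert hΨ (hp.isClosedMap F hF).measurableSet using 1
    ext θ
    simp [Set.Nonempty, and_comm]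

section Argmin

variable {γ : Type*} [CompleteLinearOrder γ] {h : Z → γ}

lemma exists_biInf_inter_eq {K F : Set Z} (hK : IsCompact K) (hF : IsClosed F)
    (hKF : (K ∩ F).Nonempty) (hh : LowerSemicontinuous h) :
    ∃ z ∈ K ∩ F, ⨅ w ∈ K ∩ F, h w = h z := by
  obtain ⟨z, hz, hmin⟩ := (hh.lowerSemicontinuousOn _).exists_isMinOn hKF (hK.inter_right hF)
  exact ⟨z, hz, le_antisymm (iInf₂_le z hz) (le_iInf₂ fun _ hw => hmin hw)⟩

variable [TopologicalSpace γ] [OrderTopology γ] [SecondCountableTopology γ] [MeasurableSpace γ]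
  [BorelSpace γ]

lemma IsMeasurableMultifunction.measurable_biInf_inter {K : S → Set Z}
    (hK : IsMeasurableMultifunction K) {F : Set Z} (hF : IsClosed F) (hh : LowerSemicontinuous h) :
    Measurable fun θ => ⨅ z ∈ K θ ∩ F, h z := by
  refine measurable_of_Iic fun a => ?_
  obtain rfl | ha := eq_or_ne a ⊤
  · simp
  convert hK.measurableSet_hits _ (hF.inter (hh.isClosed_preimage a)) using 1
  ext θ
  constructor
  · intro hle
    have hne : (K θ ∩ F).Nonempty := by
      by_contra hempty
      rw [Set.not_nonempty_iff_eq_empty] at hempty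
      rw [Set.mem_preimage, hempty, iInf_emptyset] at hle
      exact ha (top_le_iff.1 hle)
    obtain ⟨z, hz, hinf⟩ := exists_biInf_inter_eq (hK.isCompact θ) hF hne hh
    exact ⟨z, hz.1, hz.2, hinf.symm.trans_le hle⟩
  · rintro ⟨z, hzK, hzF, hza⟩
    exact (iInf₂_le z ⟨hzK, hzF⟩).trans hza

lemma IsMeasurableMultifunction.argmin {K : S → Set Z} (hK : IsMeasurableMultifunction K)
    (hh : LowerSemicontinuous h) :
    IsMeasurableMultifunction fun θ => {z ∈ K θ | h z ≤ ⨅ w ∈ K θ, h w} where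
  isCompact θ := (hK.isCompact θ).inter_right (hh.isClosed_preimage _)
  nonempty θ := by
    obtain ⟨z, hz, hinf⟩ := exists_biInf_inter_eq (hK.isCompact θ) isClosed_univ
      (by simpa using hK.nonempty θ) hh
    simp only [Set.inter_univ] at hz hinf
    exact ⟨z, hz, hinf.ge⟩
  measurableSet_hits F hF := by
    have hmin : Measurable fun θ => ⨅ z ∈ K θ, h z := by
      simpa using hK.measurable_biInf_inter isClosed_univ hh
    convert (hK.measurableSet_hits F hF).inter
      (measurableSet_le (hK.measurable_biInf_inter hF hh) hmin) using 1
    ext θ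
    constructor
    · rintro ⟨z, ⟨hzK, hz⟩, hzF⟩
      exact ⟨⟨z, hzK, hzF⟩, (iInf₂_le z ⟨hzK, hzF⟩).trans hz⟩
    · rintro ⟨hne, hle⟩
      obtain ⟨z, hz, hinf⟩ := exists_biInf_inter_eq (hK.isCompact θ) hF hne hh
      exact ⟨z, ⟨hz.1, hinf.symm.trans_le hle⟩, hz.2⟩

end Argmin

lemma isMeasurableMultifunction_avoiding {K : S → Set Z} (hK : IsMeasurableMultifunction K)
    {U : Set Z} (hU : IsOpen U) : IsMeasurableMultifunction fun θ => avoiding U (K θ) where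
  isCompact θ := (hK.isCompact θ).inter_right (isClosed_imp hU isClosed_const)
  nonempty θ := by
    have h := avoiding_inter_nonempty_iff (U := U) (K := K θ) (F := Set.univ)
    simp only [Set.inter_univ, Set.univ_inter, Set.inter_compl_nonempty_iff, hK.nonempty θ,
      and_true] at h
    exact h.2 (em' _)
  measurableSet_hits F hF := by
    simp only [avoiding_inter_nonempty_iff]
    exact (hK.measurableSet_hits _ (hF.inter hU.isClosed_compl)).union
      ((hK.measurableSet_subset hU).inter (hK.measurableSet_hits F hF))

lemma isMeasurableMultifunction_avoidingSeq {K : S → Set Z} (hK : IsMeasurableMultifunction K)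
    {U : ℕ → Set Z} (hU : ∀ n, IsOpen (U n)) (n : ℕ) :
    IsMeasurableMultifunction fun θ => avoidingSeq U (K θ) n := by
  induction n with
  | zero => exact hK
  | succ n ih => exact isMeasurableMultifunction_avoiding ih (hU n)

-- Avoiding the members of a countable basis one after the other decides, measurably in `θ`, which
-- of them contain the point that is eventually selected.
theorem IsMeasurableMultifunction.exists_measurable_selection [T2Space Z]
    [SecondCountableTopology Z] [MeasurableSpace Z] [BorelSpace Z] {K : S → Set Z}
    (hK : IsMeasurableMultifunction K) :
    ∃ z : S → Z, Measurable z ∧ ∀ θ, z θ ∈ K θ := by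
  obtain ⟨U, hU⟩ := TopologicalSpace.exists_seq_basis Z
  have hUo (n : ℕ) : IsOpen (U n) := hU.isOpen ⟨n, rfl⟩
  have hL := isMeasurableMultifunction_avoidingSeq hK hUo
  have hne (θ : S) : (⋂ n, avoidingSeq U (K θ) n).Nonempty :=
    IsCompact.nonempty_iInter_of_sequence_nonempty_isCompact_isClosed _
      (fun _ => Set.sep_subset _ _) (fun n => (hL n).nonempty θ) (hK.isCompact θ)
      fun n => ((hL n).isCompact θ).isClosed
  choose z hz using hne
  simp only [Set.mem_iInter] at hz
  refine ⟨z, ?_, fun θ => hz θ 0⟩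
  rw [‹BorelSpace Z›.measurable_eq, hU.borel_eq_generateFrom]
  refine measurable_generateFrom ?_
  rintro _ ⟨n, rfl⟩
  convert (hL n).measurableSet_subset (hUo n) using 1
  ext θ
  exact mem_iff_avoidingSeq_subset (hz θ) n

end MeasurableMultifunction

section ProbabilityMeasure

lemma exists_countable_isOpen_lt_measure (X : Type*) [TopologicalSpace X]
    [SecondCountableTopology X] [MeasurableSpace X] :
    ∃ 𝒰 : Set (Set X), 𝒰.Countable ∧ (∀ U ∈ 𝒰, IsOpen U) ∧
      ∀ (μ : Measure X) (G : Set X) (a : ℝ≥0∞), IsOpen G → a < μ G → ∃ U ∈ 𝒰, U ⊆ G ∧ a < μ U := by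
  have hB := TopologicalSpace.isBasis_countableBasis X
  let 𝒰 : Set (Set X) :=
    Set.sUnion '' {s | s.Finite ∧ s ⊆ TopologicalSpace.countableBasis X}
  have hcount : 𝒰.Countable :=
    (Set.countable_ofPred_finite_subset (TopologicalSpace.countable_countableBasis X)).image _
  refine ⟨𝒰, hcount, ?_, fun μ G a hG ha => ?_⟩
  · rintro _ ⟨s, ⟨-, hs⟩, rfl⟩
    exact isOpen_sUnion fun U hU => hB.isOpen (hs hU)
  have hdir : DirectedOn (· ⊆ ·) {U ∈ 𝒰 | U ⊆ G} := by
    rintro _ ⟨⟨s, ⟨hsf, hs⟩, rfl⟩, hsG⟩ _ ⟨⟨t, ⟨htf, ht⟩, rfl⟩, htG⟩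
    refine ⟨⋃₀ s ∪ ⋃₀ t, ⟨⟨s ∪ t, ⟨hsf.union htf, Set.union_subset hs ht⟩, Set.sUnion_union s t⟩,
      Set.union_subset hsG htG⟩, Set.subset_union_left, Set.subset_union_right⟩
  have hcover : G = ⋃ U ∈ {U ∈ 𝒰 | U ⊆ G}, U := by
    refine subset_antisymm (fun x hx => ?_) (Set.iUnion₂_subset fun U hU => hU.2)
    obtain ⟨U, hU, hxU, hUG⟩ := hB.exists_subset_of_mem_open hx hG
    refine Set.mem_biUnion (x := U) ⟨⟨{U}, ⟨Set.finite_singleton U, ?_⟩, ?_⟩, hUG⟩ hxU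
    · simpa using hU
    · exact Set.sUnion_singleton U
  rw [hcover, measure_biUnion_eq_iSup (hcount.mono (Set.sep_subset _ _)) hdir] at ha
  simp only [lt_iSup_iff] at ha
  obtain ⟨U, hU, haU⟩ := ha
  exact ⟨U, hU.1, hU.2, haU⟩

section OpensMeasurableSpace

variable {X : Type*} [TopologicalSpace X] [MeasurableSpace X] [OpensMeasurableSpace X]
  [HasOuterApproxClosed X]

lemma lowerSemicontinuous_measure_isOpen {G : Set X} (hG : IsOpen G) :
    LowerSemicontinuous fun μ : ProbabilityMeasure X => (μ : Measure X) G :=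
  lowerSemicontinuous_iff_le_liminf.2 fun _ =>
    ProbabilityMeasure.le_liminf_measure_open_of_tendsto tendsto_id hG

variable (X) in
theorem exists_countable_subbasis_probabilityMeasure [SecondCountableTopology X] :
    ∃ 𝒮 : Set (Set (ProbabilityMeasure X)), 𝒮.Countable ∧
      (∀ V ∈ 𝒮, ∃ G, IsOpen G ∧ ∃ a : ℝ≥0∞,
        V = {μ : ProbabilityMeasure X | a < (μ : Measure X) G}) ∧
      (inferInstance : TopologicalSpace (ProbabilityMeasure X)) =
        TopologicalSpace.generateFrom 𝒮 := by
  obtain ⟨𝒰, h𝒰, h𝒰o, happrox⟩ := exists_countable_isOpen_lt_measure X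
  obtain ⟨D, hDc, hD⟩ := TopologicalSpace.exists_countable_dense ℝ≥0∞
  let V (U : Set X) (a : ℝ≥0∞) : Set (ProbabilityMeasure X) := {μ | a < (μ : Measure X) U}
  have hcount : (Set.image2 V 𝒰 D).Countable := h𝒰.image2 hDc _
  refine ⟨Set.image2 V 𝒰 D, hcount, ?_, le_antisymm (le_generateFrom ?_) ?_⟩
  · rintro _ ⟨U, hU, a, -, rfl⟩
    exact ⟨U, h𝒰o U hU, a, rfl⟩
  · rintro _ ⟨U, hU, a, -, rfl⟩
    exact (lowerSemicontinuous_measure_isOpen (h𝒰o U hU)).isOpen_preimage a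
  refine le_of_nhds_le_nhds fun μ => ?_
  let τ := TopologicalSpace.generateFrom (Set.image2 V 𝒰 D)
  have : @SecondCountableTopology _ τ := @SecondCountableTopology.mk _ τ ⟨_, hcount, rfl⟩
  have : (@nhds _ τ μ).IsCountablyGenerated := inferInstance
  refine tendsto_of_forall_isOpen_le_liminf' (L := @nhds _ τ μ) (μs := id) fun G hG => ?_
  refine le_of_forall_lt_imp_le_of_dense fun a ha => ?_
  obtain ⟨U, hU, hUG, haU⟩ := happrox μ G a hG ha
  obtain ⟨q, hqD, haq, hqU⟩ := hD.exists_between haU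
  have hV : IsOpen[τ] (V U q) := TopologicalSpace.isOpen_generateFrom_of_mem ⟨U, hU, q, hqD, rfl⟩
  refine le_liminf_of_le (by isBoundedDefault) ?_
  filter_upwards [hV.mem_nhds hqU] with ν hν
  exact haq.le.trans (hν.le.trans (measure_mono hUG))

instance secondCountableTopology_probabilityMeasure [SecondCountableTopology X] :
    SecondCountableTopology (ProbabilityMeasure X) :=
  let ⟨𝒮, hcount, _, heq⟩ := exists_countable_subbasis_probabilityMeasure X
  ⟨𝒮, hcount, heq⟩

end OpensMeasurableSpace

section BorelSpace

variable {X : Type*} [TopologicalSpace X] [MeasurableSpace X] [BorelSpace X]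
  [HasOuterApproxClosed X]

lemma measurable_coe_of_continuous {T : Type*} [TopologicalSpace T]
    {mT : MeasurableSpace T} [OpensMeasurableSpace T] {m : T → ProbabilityMeasure X}
    (hm : Continuous m) : Measurable fun t => (m t : Measure X) :=
  Measurable.measure_of_isPiSystem_of_isProbabilityMeasure BorelSpace.measurable_eq
    isPiSystem_isOpen fun _ hG => ((lowerSemicontinuous_measure_isOpen hG).comp hm).measurable

instance borelSpace_probabilityMeasure [SecondCountableTopology X] :
    BorelSpace (ProbabilityMeasure X) := by
  refine ⟨le_antisymm ?_ ?_⟩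
  · have : @OpensMeasurableSpace (ProbabilityMeasure X) _ (borel _) :=
      @OpensMeasurableSpace.mk _ _ (borel _) le_rfl
    exact (measurable_coe_of_continuous (mT := borel _) continuous_id).comap_le
  · obtain ⟨𝒮, -, h𝒮, heq⟩ := exists_countable_subbasis_probabilityMeasure X
    rw [borel_eq_generateFrom_of_subbasis heq]
    refine MeasurableSpace.generateFrom_le fun V hV => ?_
    obtain ⟨G, hG, a, rfl⟩ := h𝒮 V hV
    exact ((Measure.measurable_coe hG.measurableSet).comp measurable_subtype_coe) measurableSet_Ioi

end BorelSpace

end ProbabilityMeasure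

lemma volume_setOf_ofReal_lt (a : ℝ≥0∞) :
    volume {t : ℝ | 0 < t ∧ ENNReal.ofReal t < a} = a := by
  obtain rfl | ha := eq_or_ne a ⊤
  · have hIoi : {t : ℝ | 0 < t ∧ ENNReal.ofReal t < ⊤} = Set.Ioi 0 := by ext; simp
    rw [hIoi, Real.volume_Ioi]
  have hIoo : {t : ℝ | 0 < t ∧ ENNReal.ofReal t < a} = Set.Ioo 0 a.toReal := by
    ext t
    exact and_congr_right fun ht => ENNReal.ofReal_lt_iff_lt_toReal ht.le ha
  rw [hIoo, Real.volume_Ioo, sub_zero, ENNReal.ofReal_toReal ha]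

lemma measurableSet_hypograph {X : Type*} [MeasurableSpace X] {f : X → ℝ≥0∞}
    (hf : Measurable f) : MeasurableSet {p : X × ℝ | 0 < p.2 ∧ ENNReal.ofReal p.2 < f p.1} :=
  (measurableSet_lt measurable_const measurable_snd).inter
    (measurableSet_lt (ENNReal.measurable_ofReal.comp measurable_snd) (hf.comp measurable_fst))

lemma lintegral_eq_lintegral_meas_ofReal_lt {X : Type*} [MeasurableSpace X] (μ : Measure X)
    [SFinite μ] {f : X → ℝ≥0∞} (hf : Measurable f) :
    ∫⁻ x, f x ∂μ = ∫⁻ t, μ {x | 0 < t ∧ ENNReal.ofReal t < f x} ∂(volume : Measure ℝ) := by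
  calc ∫⁻ x, f x ∂μ
      = ∫⁻ x, volume {t : ℝ | 0 < t ∧ ENNReal.ofReal t < f x} ∂μ := by
        simp only [volume_setOf_ofReal_lt]
    _ = (μ.prod volume) {p : X × ℝ | 0 < p.2 ∧ ENNReal.ofReal p.2 < f p.1} :=
        (Measure.prod_apply (measurableSet_hypograph hf)).symm
    _ = ∫⁻ t, μ {x | 0 < t ∧ ENNReal.ofReal t < f x} ∂(volume : Measure ℝ) :=
        Measure.prod_apply_symm (measurableSet_hypograph hf)

theorem lowerSemicontinuous_lintegral {X : Type*} [TopologicalSpace X] [MeasurableSpace X]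
    [OpensMeasurableSpace X] [SecondCountableTopology X] [HasOuterApproxClosed X] {f : X → ℝ≥0∞}
    (hf : LowerSemicontinuous f) :
    LowerSemicontinuous fun π : ProbabilityMeasure X => ∫⁻ x, f x ∂(π : Measure X) := by
  have hopen (t : ℝ) : IsOpen {x | 0 < t ∧ ENNReal.ofReal t < f x} :=
    isOpen_const.and (hf.isOpen_preimage _)
  simp_rw [lintegral_eq_lintegral_meas_ofReal_lt _ hf.measurable]
  refine lowerSemicontinuous_iff_le_liminf.2 fun π => ?_
  calc ∫⁻ t, (π : Measure X) {x | 0 < t ∧ ENNReal.ofReal t < f x}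
      ≤ ∫⁻ t, liminf (fun ν : ProbabilityMeasure X =>
          (ν : Measure X) {x | 0 < t ∧ ENNReal.ofReal t < f x}) (𝓝 π) :=
        lintegral_mono fun t => (lowerSemicontinuous_measure_isOpen (hopen t)).le_liminf π
    _ ≤ liminf (fun ν : ProbabilityMeasure X =>
          ∫⁻ t, (ν : Measure X) {x | 0 < t ∧ ENNReal.ofReal t < f x}) (𝓝 π) :=
        lintegral_liminf_le fun _ =>
          measurable_measure_prodMk_right (measurableSet_hypograph hf.measurable)

section Marginals

variable {X Y : Type*} [TopologicalSpace X] [PolishSpace X] [MeasurableSpace X] [BorelSpace X]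
  [TopologicalSpace Y] [PolishSpace Y] [MeasurableSpace Y] [BorelSpace Y]

/-- The pair of marginals of a probability measure on a product. -/
def marginals {X Y : Type*} [MeasurableSpace X] [MeasurableSpace Y]
    (π : ProbabilityMeasure (X × Y)) : ProbabilityMeasure X × ProbabilityMeasure Y :=
  (π.map measurable_fst.aemeasurable, π.map measurable_snd.aemeasurable)

lemma continuous_marginals {X Y : Type*} [TopologicalSpace X] [MeasurableSpace X] [BorelSpace X]
    [TopologicalSpace Y] [MeasurableSpace Y] [BorelSpace Y] [SecondCountableTopologyEither X Y] :
    Continuous (marginals (X := X) (Y := Y)) :=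
  (ProbabilityMeasure.continuous_map continuous_fst).prodMk
    (ProbabilityMeasure.continuous_map continuous_snd)

lemma surjective_marginals {X Y : Type*} [MeasurableSpace X] [MeasurableSpace Y] :
    Function.Surjective (marginals (X := X) (Y := Y)) := fun ⟨μ, ν⟩ =>
  ⟨μ.prod ν, Prod.ext (μ.map_fst_prod ν) (μ.map_snd_prod ν)⟩

lemma isTightMeasureSet_of_isCompact {K : Set (ProbabilityMeasure X)} (hK : IsCompact K) :
    IsTightMeasureSet {x : Measure X | ∃ μ ∈ K, (μ : Measure X) = x} := by
  let := TopologicalSpace.upgradeIsCompletelyMetrizable X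
  exact isTightMeasureSet_of_isCompact_closure (hK.isClosed.closure_eq.symm ▸ hK)

-- Prokhorov's theorem in both directions, as couplings of tight families are tight.
theorem isProperMap_marginals : IsProperMap (marginals (X := X) (Y := Y)) := by
  refine isProperMap_iff_isCompact_preimage.2 ⟨continuous_marginals, fun K hK => ?_⟩
  have hfst := isTightMeasureSet_of_isCompact (hK.image continuous_fst)
  have hsnd := isTightMeasureSet_of_isCompact (hK.image continuous_snd)
  have htight : IsTightMeasureSet
      {x : Measure (X × Y) | ∃ π ∈ marginals ⁻¹' K, (π : Measure (X × Y)) = x} := by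
    refine .prodMk (hfst.subset ?_) (hsnd.subset ?_)
    · rintro _ ⟨_, ⟨π, hπ, rfl⟩, rfl⟩
      exact ⟨_, ⟨marginals π, hπ, rfl⟩, rfl⟩
    · rintro _ ⟨_, ⟨π, hπ, rfl⟩, rfl⟩
      exact ⟨_, ⟨marginals π, hπ, rfl⟩, rfl⟩
  rw [← (hK.isClosed.preimage continuous_marginals).closure_eq]
  exact isCompact_closure_of_isTightMeasureSet htight

end Marginals

section OptimalTransport

variable {S X Y : Type*} [MeasurableSpace S]
  [TopologicalSpace X] [PolishSpace X] [MeasurableSpace X] [BorelSpace X]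
  [TopologicalSpace Y] [PolishSpace Y] [MeasurableSpace Y] [BorelSpace Y]

/-- A Markov kernel as a map into the space of probability measures. -/
def toProbabilityMeasure {S X : Type*} [MeasurableSpace S] [MeasurableSpace X] (P : Kernel S X)
    [IsMarkovKernel P] (θ : S) : ProbabilityMeasure X :=
  ⟨P θ, inferInstance⟩

lemma measurable_toProbabilityMeasure {S X : Type*} [MeasurableSpace S] [MeasurableSpace X]
    (P : Kernel S X) [IsMarkovKernel P] : Measurable (toProbabilityMeasure P) :=
  P.measurable.subtype_mk

lemma marginals_eq_iff {X Y : Type*} [MeasurableSpace X] [MeasurableSpace Y]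
    {π : ProbabilityMeasure (X × Y)} {μ : ProbabilityMeasure X} {ν : ProbabilityMeasure Y} :
    marginals π = (μ, ν) ↔
      (π : Measure (X × Y)).fst = (μ : Measure X) ∧ (π : Measure (X × Y)).snd = (ν : Measure Y) :=
  Prod.ext_iff.trans (and_congr Subtype.ext_iff Subtype.ext_iff)

theorem exists_kernel_optimal_lintegral (P : Kernel S X) (Q : Kernel S Y) [IsMarkovKernel P]
    [IsMarkovKernel Q] {f : X × Y → ℝ≥0∞} (hf : LowerSemicontinuous f) :
    ∃ γ : Kernel S (X × Y), IsMarkovKernel γ ∧ ∀ θ,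
      ((γ θ).fst = P θ ∧ (γ θ).snd = Q θ) ∧
        ∀ μ : Measure (X × Y), μ.fst = P θ → μ.snd = Q θ →
          ∫⁻ p, f p ∂γ θ ≤ ∫⁻ p, f p ∂μ := by
  let Ψ (θ : S) := (toProbabilityMeasure P θ, toProbabilityMeasure Q θ)
  have hΨ : Measurable Ψ :=
    (measurable_toProbabilityMeasure P).prodMk (measurable_toProbabilityMeasure Q)
  have hcouplings := isMeasurableMultifunction_fiber isProperMap_marginals surjective_marginals hΨ
  obtain ⟨γ, hγ, hγopt⟩ :=
    (hcouplings.argmin (lowerSemicontinuous_lintegral hf)).exists_measurable_selection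
  refine ⟨⟨fun θ => γ θ, measurable_subtype_coe.comp hγ⟩, ⟨fun θ => (γ θ).2⟩, fun θ => ?_⟩
  obtain ⟨hmarg, hmin⟩ := hγopt θ
  refine ⟨marginals_eq_iff.1 hmarg, fun μ hfst hsnd => ?_⟩
  have : IsProbabilityMeasure (μ.map Prod.fst) := by
    rw [← Measure.fst, hfst]
    infer_instance
  have hμ : IsProbabilityMeasure μ := Measure.isProbabilityMeasure_of_map Prod.fst
  have hμmarg : marginals ⟨μ, hμ⟩ = Ψ θ := marginals_eq_iff.2 ⟨hfst, hsnd⟩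
  exact hmin.trans (iInf₂_le (⟨μ, hμ⟩ : ProbabilityMeasure (X × Y)) hμmarg)

end OptimalTransport

/-- The integral of an extended-real function, as the integral of its positive part minus that of
its negative part. When both are infinite this is the junk value `⊤ - ⊤ = ⊥`. -/
def erealIntegral {Ω : Type*} [MeasurableSpace Ω] (μ : Measure Ω) (f : Ω → EReal) : EReal :=
  ((∫⁻ x, (f x).toENNReal ∂μ : ℝ≥0∞) : EReal) - ((∫⁻ x, (-f x).toENNReal ∂μ : ℝ≥0∞) : EReal)

lemma toENNReal_add_coe_add {x : EReal} {g : ℝ} (h : ((-g : ℝ) : EReal) ≤ x) :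
    (x + g).toENNReal + ((-x).toENNReal + ENNReal.ofReal (-g)) =
      x.toENNReal + ENNReal.ofReal g := by
  induction x with
  | bot => simp at h
  | top => simp
  | coe x =>
    rw [EReal.coe_le_coe_iff] at h
    rw [← EReal.coe_add, ← EReal.coe_neg]
    simp only [EReal.real_coe_toENNReal, ENNReal.ofReal]
    norm_cast
    rw [← NNReal.coe_inj]
    push_cast [Real.coe_toNNReal']
    rw [max_eq_left (by linarith : 0 ≤ x + g)]
    linarith [max_zero_sub_eq_self x, max_zero_sub_eq_self g]

lemma coe_ennreal_sub_eq_of_add_eq {a b n u v : ℝ≥0∞} (hn : n ≠ ⊤) (hu : u ≠ ⊤) (hv : v ≠ ⊤)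
    (h : a + (n + v) = b + u) :
    (b : EReal) - n = (a : EReal) - ((u.toReal - v.toReal : ℝ) : EReal) := by
  lift n to ℝ≥0 using hn
  lift u to ℝ≥0 using hu
  lift v to ℝ≥0 using hv
  obtain rfl | hb := eq_or_ne b ⊤
  · obtain rfl : a = ⊤ := by simpa using h
    simp only [EReal.coe_ennreal_top, EReal.coe_nnreal_eq_coe_real, EReal.top_sub_coe]
  have ha : a ≠ ⊤ := ne_top_of_le_ne_top (by finiteness) (le_self_add.trans h.le)
  lift a to ℝ≥0 using ha
  lift b to ℝ≥0 using hb
  norm_cast at h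
  simp only [EReal.coe_nnreal_eq_coe_real, ENNReal.coe_toReal, ← EReal.coe_sub,
    EReal.coe_eq_coe_iff]
  have hreal : (a : ℝ) + (n + v) = b + u := by exact_mod_cast h
  linarith only [hreal]

lemma erealIntegral_eq_lintegral_sub {Ω : Type*} [MeasurableSpace Ω] {μ : Measure Ω}
    {f : Ω → EReal} (hf : Measurable f) {g : Ω → ℝ} (hg : Integrable g μ)
    (h : ∀ x, ((-g x : ℝ) : EReal) ≤ f x) :
    erealIntegral μ f =
      ((∫⁻ x, (f x + g x).toENNReal ∂μ : ℝ≥0∞) : EReal) - ((∫ x, g x ∂μ : ℝ) : EReal) := by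
  have hpos : ∫⁻ x, ENNReal.ofReal (g x) ∂μ ≠ ⊤ := hg.lintegral_lt_top.ne
  have hneg : ∫⁻ x, ENNReal.ofReal (-g x) ∂μ ≠ ⊤ := hg.neg.lintegral_lt_top.ne
  have hfneg : ∫⁻ x, (-f x).toENNReal ∂μ ≠ ⊤ := by
    refine ne_top_of_le_ne_top hpos (lintegral_mono fun x => ?_)
    exact EReal.toENNReal_le_toENNReal (EReal.neg_le.1 (by simpa using h x))
  have hgm : AEMeasurable (fun x => ENNReal.ofReal (-g x)) μ := hg.1.aemeasurable.neg.ennreal_ofReal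
  have key : ∫⁻ x, (f x + g x).toENNReal ∂μ +
      (∫⁻ x, (-f x).toENNReal ∂μ + ∫⁻ x, ENNReal.ofReal (-g x) ∂μ) =
      ∫⁻ x, (f x).toENNReal ∂μ + ∫⁻ x, ENNReal.ofReal (g x) ∂μ := by
    have hfm : AEMeasurable (fun x => (-f x).toENNReal) μ := hf.neg.ereal_toENNReal.aemeasurable
    rw [← lintegral_add_right' _ hgm, ← lintegral_add_right' _ (hfm.fun_add hgm),
      ← lintegral_add_left hf.ereal_toENNReal]
    exact lintegral_congr fun x => toENNReal_add_coe_add (h x)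
  rw [integral_eq_lintegral_pos_part_sub_lintegral_neg_part hg]
  exact coe_ennreal_sub_eq_of_add_eq hfneg hpos hneg key

section Marginals

variable {X Y : Type*} [MeasurableSpace X] [MeasurableSpace Y] {a : X → ℝ} {b : Y → ℝ}
  {π : Measure (X × Y)}

lemma integrable_add_of_integrable_marginals (ha : Integrable a π.fst)
    (hb : Integrable b π.snd) : Integrable (fun p : X × Y => a p.1 + b p.2) π :=
  (ha.comp_measurable measurable_fst).add (hb.comp_measurable measurable_snd)

lemma integral_add_eq_integral_marginals (ha : Integrable a π.fst) (hb : Integrable b π.snd) :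
    ∫ p, a p.1 + b p.2 ∂π = ∫ x, a x ∂π.fst + ∫ y, b y ∂π.snd := by
  rw [Measure.fst, Measure.snd, integral_map measurable_fst.aemeasurable ha.1,
    integral_map measurable_snd.aemeasurable hb.1]
  exact integral_add (ha.comp_measurable measurable_fst) (hb.comp_measurable measurable_snd)

end Marginals

lemma lowerSemicontinuous_toENNReal_add_coe {Z : Type*} [TopologicalSpace Z] {f : Z → EReal}
    (hf : LowerSemicontinuous f) {g : Z → ℝ} (hg : LowerSemicontinuous g) :
    LowerSemicontinuous fun z => (f z + g z).toENNReal := by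
  have hg' : LowerSemicontinuous fun z => (g z : EReal) :=
    continuous_coe_real_ereal.comp_lowerSemicontinuous hg fun _ _ => EReal.coe_le_coe
  have hadd := hf.add' hg' fun z =>
    EReal.continuousAt_add (.inr (EReal.coe_ne_bot _)) (.inr (EReal.coe_ne_top _))
  exact EReal.continuous_toENNReal.comp_lowerSemicontinuous hadd
    fun _ _ => EReal.toENNReal_le_toENNReal

theorem measurable_optimal_transport_general {S X Y : Type*} [MeasurableSpace S]
    [TopologicalSpace X] [PolishSpace X] [MeasurableSpace X] [BorelSpace X]
    [TopologicalSpace Y] [PolishSpace Y] [MeasurableSpace Y] [BorelSpace Y]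
    (P : Kernel S X) (Q : Kernel S Y) [IsMarkovKernel P] [IsMarkovKernel Q]
    {a : X → ℝ} (ha : LowerSemicontinuous a) (haP : ∀ θ, Integrable a (P θ))
    {b : Y → ℝ} (hb : LowerSemicontinuous b) (hbQ : ∀ θ, Integrable b (Q θ))
    {c : X × Y → EReal} (hc : LowerSemicontinuous c)
    (hbound : ∀ p, ((-(a p.1 + b p.2) : ℝ) : EReal) ≤ c p) :
    ∃ γ : Kernel S (X × Y), IsMarkovKernel γ ∧ ∀ θ,
      ((γ θ).fst = P θ ∧ (γ θ).snd = Q θ) ∧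
        ∀ μ : Measure (X × Y), μ.fst = P θ → μ.snd = Q θ →
          erealIntegral (γ θ) c ≤ erealIntegral μ c := by
  have hab : LowerSemicontinuous fun p : X × Y => a p.1 + b p.2 :=
    (ha.comp continuous_fst).add (hb.comp continuous_snd)
  have hcost {θ : S} {μ : Measure (X × Y)} (hfst : μ.fst = P θ) (hsnd : μ.snd = Q θ) :
      erealIntegral μ c = ((∫⁻ p, (c p + (a p.1 + b p.2 : ℝ)).toENNReal ∂μ : ℝ≥0∞) : EReal) -
        ((∫ x, a x ∂P θ + ∫ y, b y ∂Q θ : ℝ) : EReal) := by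
    have haμ : Integrable a μ.fst := hfst ▸ haP θ
    have hbμ : Integrable b μ.snd := hsnd ▸ hbQ θ
    rw [erealIntegral_eq_lintegral_sub hc.measurable
      (integrable_add_of_integrable_marginals haμ hbμ) hbound,
      integral_add_eq_integral_marginals haμ hbμ, hfst, hsnd]
  obtain ⟨γ, hγ, hγopt⟩ :=
    exists_kernel_optimal_lintegral P Q (lowerSemicontinuous_toENNReal_add_coe hc hab)
  refine ⟨γ, hγ, fun θ => ⟨(hγopt θ).1, fun _ hfst hsnd => ?_⟩⟩
  rw [hcost (hγopt θ).1.1 (hγopt θ).1.2, hcost hfst hsnd]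
  exact EReal.sub_le_sub (EReal.coe_ennreal_le_coe_ennreal_iff.2 ((hγopt θ).2 _ hfst hsnd)) le_rfl

lemma integrable_mul_one_add_norm {d : ℕ} {μ : Measure (Euc d)} [IsFiniteMeasure μ]
    (hμ : FiniteFirstMoment μ) (C : ℝ) : Integrable (fun x => C * (1 + ‖x‖)) μ :=
  ((integrable_const 1).add hμ.norm).const_mul C

lemma eCost_eq_erealIntegral {d : ℕ} {μ ν : Measure (Euc d)} [IsFiniteMeasure μ]
    (hμ : FiniteFirstMoment μ) (hν : FiniteFirstMoment ν) {c : Euc d × Euc d → EReal}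
    (hc : Measurable c) {C : ℝ}
    (hbound : ∀ p : Euc d × Euc d, ((-(C * (1 + ‖p.1‖ + ‖p.2‖)) : ℝ) : EReal) ≤ c p)
    {π : Measure (Euc d × Euc d)} (hπ : IsCoupling π μ ν) :
    ECost c C π = erealIntegral π c := by
  obtain ⟨rfl, rfl⟩ : π.fst = μ ∧ π.snd = ν := hπ
  refine (erealIntegral_eq_lintegral_sub hc ?_ hbound).symm
  simpa only [mul_add] using integrable_add_of_integrable_marginals
    (integrable_mul_one_add_norm hμ C) (hν.norm.const_mul C)

/-- Measurable selection of optimal transport plans: for kernels P, Q with finite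
first moments and a lower semicontinuous cost bounded below by −C(1+‖x‖+‖y‖),
there is a kernel of optimal couplings. -/
theorem measurable_optimal_transport
    (d : ℕ) (hd : 1 ≤ d) {S : Type} [MeasurableSpace S]
    (P Q : Kernel S (Euc d)) [IsMarkovKernel P] [IsMarkovKernel Q]
    (hP : ∀ θ, FiniteFirstMoment (P θ)) (hQ : ∀ θ, FiniteFirstMoment (Q θ))
    (c : Euc d × Euc d → EReal) (hc : LowerSemicontinuous c)
    (C : ℝ) (hbound : ∀ p : Euc d × Euc d, ((-(C * (1 + ‖p.1‖ + ‖p.2‖)) : ℝ) : EReal) ≤ c p) :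
    ∃ γ : Kernel S (Euc d × Euc d), IsMarkovKernel γ ∧
      ∀ θ, IsCoupling (γ θ) (P θ) (Q θ) ∧
        ∀ μ' : Measure (Euc d × Euc d), IsProbabilityMeasure μ' →
          IsCoupling μ' (P θ) (Q θ) → ECost c C (γ θ) ≤ ECost c C μ' := by
  obtain ⟨γ, hγ, hγopt⟩ := measurable_optimal_transport_general P Q
    (a := fun x => C * (1 + ‖x‖)) (Continuous.lowerSemicontinuous (by fun_prop))
    (fun θ => integrable_mul_one_add_norm (hP θ) C)
    (b := fun y => C * ‖y‖) (Continuous.lowerSemicontinuous (by fun_prop))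
    (fun θ => (hQ θ).norm.const_mul C) hc fun p => by simpa only [mul_add] using hbound p
  refine ⟨γ, hγ, fun θ => ⟨(hγopt θ).1, fun μ' _ hμ' => ?_⟩⟩
  have hcost {π} := eCost_eq_erealIntegral (hP θ) (hQ θ) hc.measurable hbound (π := π)
  exact (hcost (hγopt θ).1).trans_le (((hγopt θ).2 μ' hμ'.1 hμ'.2).trans_eq (hcost hμ').symm)
end
end

section
/- Let S be a measurable space, let P and Q be probability kernels from S to ℝ^d with finite first moments such that P_θ ≤cx Q_θ for every θ ∈ S, and let c : ℝ^d × ℝ^d → ℝ ∪ {+∞} be lower semicontinuous and satisfy c(x, y) ≥ −C(1 + ‖x‖ + ‖y‖) for all x, y and some finite constant C. Then there exists a probability kernel γ from S to ℝ^d × ℝ^d such that for every θ ∈ S, γ_θ is a martingale coupling of P_θ and Q_θ and ∫ c dγ_θ ≤ ∫ c dμ for every martingale coupling μ of P_θ and Q_θ (the integrals, taken in (−∞, +∞], are well defined by the lower bound on c and the finite first moments). -/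
open MeasureTheory ProbabilityTheory Filter

noncomputable section

/-!
Martingale couplings of `P` and `Q` are the solutions of a moment problem: probability measures `γ`
with `∫ h k ∂γ ≤ a k` for countably many fixed continuous functions `h k` of linear growth, where
only the numbers `a k` depend on `P` and `Q`. Some of the `h k` control the mass far away, so the
M. Riesz extension theorem and the Riesz representation theorem show that the problem is solvable
exactly when `∑ l k * h k ≥ c` implies `∑ l k * a k ≥ c` for finitely many weights `l k ≥ 0`.
For martingale couplings this dual condition follows from the convex order: if
`φ x + ψ y + B x (y - x) ≥ 0`, then a supremum of affine functions of `y` lies between `-φ` and `ψ`.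

The dual condition is closed in `a`. It stays so for bounds `∫ f n ∂γ ≤ b n` on countably many
lower semicontinuous functions, each of which is a supremum of Lipschitz functions. Let `f 0` be
the cost and let the other `f n` be the indicators of the complements of closed sets that form a
countable `π`-system generating the Borel sets. Then the lexicographically minimal vector of bounds
is attained, and it is measurable in `a` because each coordinate is characterized by closed
conditions. A measure attaining it is optimal, and the vector prescribes its values on a generating
`π`-system, so that measure is unique and depends measurably on `a`.
-/

open scoped Topology

section LexMin

variable {α : Type*} [CompleteLinearOrder α]

/-- The sequence agreeing with the lexicographic minimum of `A` in its first `n` coordinates and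
equal to `⊤` afterwards. -/
def lexMinPrefix (A : Set (ℕ → α)) : ℕ → ℕ → α
  | 0 => ⊤
  | n + 1 => Function.update (lexMinPrefix A n) n
      (sInf {t | Function.update (lexMinPrefix A n) n t ∈ A})

/-- The lexicographically minimal element of a closed upper set `A` of sequences with `⊤ ∈ A`:
each coordinate is as small as the previous ones allow. -/
def lexMin (A : Set (ℕ → α)) (n : ℕ) : α :=
  sInf {t | Function.update (lexMinPrefix A n) n t ∈ A}

variable {A : Set (ℕ → α)}

lemma lexMinPrefix_of_lt {i n : ℕ} (h : i < n) : lexMinPrefix A n i = lexMin A i := by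
  induction n with
  | zero => exact absurd h (Nat.not_lt_zero i)
  | succ n ih =>
    rcases Nat.lt_succ_iff_lt_or_eq.1 h with h | rfl
    · rw [lexMinPrefix, Function.update_of_ne h.ne, ih h]
    · rw [lexMinPrefix, Function.update_self, lexMin]

lemma lexMinPrefix_of_le {i n : ℕ} (h : n ≤ i) : lexMinPrefix A n i = ⊤ := by
  induction n with
  | zero => rfl
  | succ n ih => rw [lexMinPrefix, Function.update_of_ne (by omega), ih (by omega)]

lemma toLex_lexMin_le (hup : IsUpperSet A) {b : ℕ → α} (hb : b ∈ A) :
    toLex (lexMin A) ≤ toLex b := by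
  refine le_of_not_gt fun ⟨n, heq, hlt⟩ => hlt.not_ge (sInf_le (hup (fun i => ?_) hb))
  rcases lt_trichotomy i n with h | rfl | h
  · rw [Function.update_of_ne h.ne, lexMinPrefix_of_lt h]
    exact (heq i h).le
  · rw [Function.update_self]
    rfl
  · rw [Function.update_of_ne h.ne', lexMinPrefix_of_le h.le]
    exact le_top

lemma lexMin_zero_le (hup : IsUpperSet A) {b : ℕ → α} (hb : b ∈ A) :
    lexMin A 0 ≤ b 0 :=
  Pi.apply_le_of_toLex (toLex_lexMin_le hup hb) fun _ hj => absurd hj (Nat.not_lt_zero _)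

lemma eq_lexMin_of_le (hup : IsUpperSet A) {b : ℕ → α} (hb : b ∈ A) (hle : b ≤ lexMin A) :
    b = lexMin A :=
  toLex.injective ((Pi.toLex_monotone hle).antisymm (toLex_lexMin_le hup hb))

variable [TopologicalSpace α]

lemma tendsto_lexMinPrefix : Tendsto (lexMinPrefix A) atTop (𝓝 (lexMin A)) :=
  tendsto_pi_nhds.2 fun i => tendsto_atTop_of_eventually_const (i₀ := i + 1)
    fun _ hn => lexMinPrefix_of_lt hn

variable [OrderTopology α]

lemma lexMinPrefix_mem (hA : IsClosed A) (htop : ⊤ ∈ A) (n : ℕ) : lexMinPrefix A n ∈ A := by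
  induction n with
  | zero => exact htop
  | succ n ih =>
    refine (hA.preimage (continuous_const.update n continuous_id)).sInf_mem ⟨⊤, ?_⟩
    rw [Set.mem_preimage, id, ← lexMinPrefix_of_le (A := A) le_rfl, Function.update_eq_self]
    exact ih

lemma lexMin_mem (hA : IsClosed A) (htop : ⊤ ∈ A) : lexMin A ∈ A :=
  hA.mem_of_tendsto tendsto_lexMinPrefix (Eventually.of_forall (lexMinPrefix_mem hA htop))

lemma update_lexMinPrefix_mem_iff (hA : IsClosed A) (hup : IsUpperSet A) (htop : ⊤ ∈ A)
    {n : ℕ} {t : α} : Function.update (lexMinPrefix A n) n t ∈ A ↔ lexMin A n ≤ t :=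
  ⟨fun h => sInf_le h, fun h => hup (Function.update_mono h)
    (lexMinPrefix_mem hA htop (n + 1))⟩

variable [SecondCountableTopology α] [MeasurableSpace α] [BorelSpace α]

lemma measurable_lexMin {S : Type*} [MeasurableSpace S] {Φ : S → Set (ℕ → α)}
    (hclosed : ∀ θ, IsClosed (Φ θ)) (hup : ∀ θ, IsUpperSet (Φ θ)) (htop : ∀ θ, ⊤ ∈ Φ θ)
    (hmeas : ∀ b : S → ℕ → α, Measurable b → MeasurableSet {θ | b θ ∈ Φ θ}) :
    Measurable fun θ => lexMin (Φ θ) := by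
  have hcoord (n : ℕ) (hn : Measurable fun θ => lexMinPrefix (Φ θ) n) :
      Measurable fun θ => lexMin (Φ θ) n := by
    refine measurable_of_Iic fun t => ?_
    simp only [Set.preimage, Set.mem_Iic,
      ← update_lexMinPrefix_mem_iff (hclosed _) (hup _) (htop _)]
    exact hmeas _ (measurable_update'.comp (hn.prodMk measurable_const))
  refine measurable_pi_lambda _ fun n => hcoord n ?_
  induction n with
  | zero => exact measurable_const
  | succ n ih => exact measurable_update'.comp (ih.prodMk (hcoord n ih))

end LexMin

section LscApprox

open ENNReal

variable {Z : Type*} [PseudoMetricSpace Z]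

/-- The Lipschitz regularisation `z ↦ inf_z' (min (f z') m + m * d(z, z'))` of `f`. It is real
valued thanks to the truncation at height `m`. -/
def lipschitzApprox (f : Z → ℝ≥0∞) (m : ℕ) (z : Z) : ℝ :=
  ⨅ z', (truncateToReal m (f z') + m * dist z z')

variable (f : Z → ℝ≥0∞)

lemma bddBelow_lipschitzApprox (m : ℕ) (z : Z) :
    BddBelow (Set.range fun z' => truncateToReal m (f z') + m * dist z z') :=
  ⟨0, by rintro _ ⟨z', rfl⟩; exact add_nonneg truncateToReal_nonneg (by positivity)⟩

lemma lipschitzApprox_nonneg (m : ℕ) (z : Z) : 0 ≤ lipschitzApprox f m z :=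
  Real.iInf_nonneg fun _ => add_nonneg truncateToReal_nonneg (by positivity)

lemma lipschitzApprox_le_truncateToReal (m : ℕ) (z : Z) :
    lipschitzApprox f m z ≤ truncateToReal m (f z) := by
  simpa only [lipschitzApprox, dist_self, mul_zero, add_zero]
    using ciInf_le (bddBelow_lipschitzApprox f m z) z

lemma lipschitzApprox_le (m : ℕ) (z : Z) : lipschitzApprox f m z ≤ m :=
  (lipschitzApprox_le_truncateToReal f m z).trans
    (truncateToReal_le (natCast_ne_top m))

lemma lipschitzWith_lipschitzApprox (m : ℕ) : LipschitzWith m (lipschitzApprox f m) := by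
  refine LipschitzWith.of_le_add_mul m fun x y => ?_
  have : Nonempty Z := ⟨x⟩
  rw [← sub_le_iff_le_add]
  refine le_ciInf fun z => ?_
  rw [sub_le_iff_le_add, NNReal.coe_natCast, add_assoc, ← mul_add, add_comm (dist y z)]
  exact (ciInf_le (bddBelow_lipschitzApprox f m x) z).trans (by gcongr; exact dist_triangle x y z)

lemma truncateToReal_le_truncateToReal_left {s t x : ℝ≥0∞} (h : s ≤ t) (ht : t ≠ ∞) :
    truncateToReal s x ≤ truncateToReal t x :=
  toReal_mono (ne_top_of_le_ne_top ht (min_le_left _ _)) (min_le_min_right x h)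

lemma monotone_lipschitzApprox : Monotone (lipschitzApprox f) := fun m n hmn z => by
  have : Nonempty Z := ⟨z⟩
  refine ciInf_mono (bddBelow_lipschitzApprox f m z) fun z' => ?_
  gcongr
  exact truncateToReal_le_truncateToReal_left (by gcongr) (natCast_ne_top n)

variable {f}

lemma iSup_lipschitzApprox (hf : LowerSemicontinuous f) (z : Z) :
    ⨆ m, ENNReal.ofReal (lipschitzApprox f m z) = f z := by
  have : Nonempty Z := ⟨z⟩
  refine le_antisymm (iSup_le fun m => ?_) (le_of_forall_lt fun r hr => ?_)
  · refine (ofReal_le_ofReal (lipschitzApprox_le_truncateToReal f m z)).trans ?_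
    rw [truncateToReal, ofReal_toReal (by simp)]
    exact min_le_right _ _
  obtain ⟨s, hrs, hsf⟩ := exists_between hr
  have hs : s ≠ ∞ := ne_top_of_lt hsf
  obtain ⟨δ, hδ, hball⟩ := Metric.eventually_nhds_iff.1 (hf z s hsf)
  obtain ⟨m, hm⟩ := exists_nat_ge (max s.toReal (s.toReal / δ))
  refine hrs.trans_le (le_iSup_of_le m ?_)
  rw [le_ofReal_iff_toReal_le hs (lipschitzApprox_nonneg _ _ _)]
  refine le_ciInf fun z' => ?_
  rcases lt_or_ge (dist z' z) δ with hz | hz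
  · have hsm : s ≤ m := (toReal_le_toReal hs (by finiteness)).1 ((le_max_left _ _).trans hm)
    have : s.toReal ≤ truncateToReal m (f z') :=
      toReal_mono (by simp) (le_min hsm (hball hz).le)
    exact this.trans (le_add_of_nonneg_right (by positivity))
  · refine le_add_of_nonneg_of_le truncateToReal_nonneg ?_
    rw [dist_comm]
    have : s.toReal ≤ m * δ := (div_le_iff₀ hδ).1 ((le_max_right _ _).trans hm)
    exact this.trans (by gcongr)

lemma lintegral_le_iff_forall_integral_lipschitzApprox_le [MeasurableSpace Z] [BorelSpace Z]
    (hf : LowerSemicontinuous f) {γ : Measure Z} [IsProbabilityMeasure γ] {b : ℝ≥0∞} :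
    ∫⁻ z, f z ∂γ ≤ b ↔ ∀ m, ∫ z, lipschitzApprox f m z ∂γ ≤ truncateToReal m b := by
  have hmeas (m : ℕ) : Measurable (lipschitzApprox f m) :=
    (lipschitzWith_lipschitzApprox f m).continuous.measurable
  have hsup : ∫⁻ z, f z ∂γ = ⨆ m, ∫⁻ z, ENNReal.ofReal (lipschitzApprox f m z) ∂γ := by
    simp_rw [← iSup_lipschitzApprox hf]
    exact lintegral_iSup (fun m => (hmeas m).ennreal_ofReal)
      fun m n hmn z => ofReal_le_ofReal (monotone_lipschitzApprox f hmn z)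
  have hle (m : ℕ) : ∫⁻ z, ENNReal.ofReal (lipschitzApprox f m z) ∂γ ≤ m := by
    calc _ ≤ ∫⁻ _, (m : ℝ≥0∞) ∂γ := lintegral_mono fun z => by
          simpa using ofReal_le_ofReal (lipschitzApprox_le f m z)
      _ = m := by simp
  rw [hsup, iSup_le_iff]
  refine forall_congr' fun m => ?_
  rw [integral_eq_lintegral_of_nonneg_ae (ae_of_all _ (lipschitzApprox_nonneg f m))
    (hmeas m).aestronglyMeasurable, truncateToReal, toReal_le_toReal
    (ne_top_of_le_ne_top (natCast_ne_top m) (hle m)) (by simp), le_min_iff]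
  exact (and_iff_right (hle m)).symm

end LscApprox

section Farkas

open scoped NNReal

variable {ι E : Type*} [AddCommGroup E] [PartialOrder E] [IsOrderedAddMonoid E] [Module ℝ E]
  [PosSMulMono ℝ E]

/-- The pointed cone of all elements that dominate a nonnegative combination of the `v k`; it is
generated by the `v k` and the positive elements. -/
def dominatingCone (v : ι → E) : PointedCone ℝ E where
  carrier := {y | ∃ l : ι →₀ ℝ≥0, Finsupp.linearCombination ℝ≥0 v l ≤ y}
  zero_mem' := ⟨0, by rw [map_zero]⟩
  add_mem' := by
    rintro y z ⟨l, hl⟩ ⟨m, hm⟩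
    exact ⟨l + m, by rw [map_add]; exact add_le_add hl hm⟩
  smul_mem' (c : ℝ≥0) y := by
    rintro ⟨l, hl⟩
    exact ⟨c • l, by
      rw [map_smul, NNReal.smul_def]
      exact smul_le_smul_of_nonneg_left hl c.coe_nonneg⟩

theorem exists_positiveLinearMap_eq_one {e : E} {v : ι → E}
    (hdual : ∀ (l : ι →₀ ℝ≥0) (c : ℝ), Finsupp.linearCombination ℝ≥0 v l ≤ c • e → 0 ≤ c)
    (hcofinal : ∀ y : E, ∃ (l : ι →₀ ℝ≥0) (c : ℝ),
      Finsupp.linearCombination ℝ≥0 v l ≤ c • e + y) :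
    ∃ L : E →ₚ[ℝ] ℝ, L e = 1 ∧ ∀ k, 0 ≤ L (v k) := by
  have he : e ≠ 0 := fun h => absurd (hdual 0 (-1) (by simp [h])) (by norm_num)
  obtain ⟨L, hLe, hLs⟩ := riesz_extension (dominatingCone v)
    (LinearPMap.mkSpanSingleton e (1 : ℝ) he)
    (by
      rintro ⟨_, hx⟩ ⟨l, hl⟩
      obtain ⟨c, rfl⟩ := Submodule.mem_span_singleton.1 hx
      rw [LinearPMap.mkSpanSingleton'_apply, smul_eq_mul, mul_one]
      exact hdual l c hl)
    (fun y => by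
      obtain ⟨l, c, h⟩ := hcofinal y
      exact ⟨⟨c • e, Submodule.mem_span_singleton.2 ⟨c, rfl⟩⟩, l, h⟩)
  refine ⟨PositiveLinearMap.mk₀ L fun y hy => hLs y ⟨0, by rwa [map_zero]⟩, ?_,
    fun k => hLs _ ⟨Finsupp.single k 1, by simp⟩⟩
  exact (hLe _).trans (LinearPMap.mkSpanSingleton_apply ℝ ℝ he 1)

end Farkas

section GrowthSpace

open scoped CompactlySupported

variable {Z : Type*} [TopologicalSpace Z]

/-- The space of continuous functions dominated by a multiple of the weight `w`. -/
def growthSpace (w : C(Z, ℝ)) : Submodule ℝ C(Z, ℝ) where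
  carrier := {f | ⇑f =O[⊤] ⇑w}
  zero_mem' := Asymptotics.isBigO_zero _ _
  add_mem' hf hg := hf.add hg
  smul_mem' c _ hf := hf.const_smul_left c

namespace growthSpace

variable {w : C(Z, ℝ)}

instance : CoeFun (growthSpace w) fun _ => Z → ℝ := ⟨fun f => f.1⟩

instance : PosSMulMono ℝ (growthSpace w) :=
  ⟨fun _ hc _ _ hfg z => mul_le_mul_of_nonneg_left (hfg z) hc⟩

lemma mem_of_abs_le {f : C(Z, ℝ)} {C : ℝ} (h : ∀ z, |f z| ≤ C * |w z|) : f ∈ growthSpace w :=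
  Asymptotics.isBigO_top.2 ⟨C, h⟩

/-- The weight as an element of its own growth space. -/
def weight (w : C(Z, ℝ)) : growthSpace w := ⟨w, Asymptotics.isBigO_refl _ _⟩

lemma exists_abs_le (hw : ∀ z, 1 ≤ w z) (f : growthSpace w) : ∃ C > 0, ∀ z, |f z| ≤ C * w z := by
  obtain ⟨C, hC⟩ := Asymptotics.isBigO_top.1 f.2
  refine ⟨max C 1, by positivity, fun z => (hC z).trans ?_⟩
  have := hw z
  rw [Real.norm_of_nonneg (by positivity)]
  gcongr
  exact le_max_left C 1

lemma mem_of_abs_le_const (hw : ∀ z, 1 ≤ w z) {f : C(Z, ℝ)} {C : ℝ} (h : ∀ z, |f z| ≤ C) :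
    f ∈ growthSpace w :=
  mem_of_abs_le fun z => (h z).trans <| le_mul_of_one_le_right ((abs_nonneg _).trans (h z)) <|
    (hw z).trans (le_abs_self _)

/-- Compactly supported functions are dominated by a weight bounded below by one. -/
def ofCompactlySupported (hw : ∀ z, 1 ≤ w z) : C_c(Z, ℝ) →ₗ[ℝ] growthSpace w where
  toFun g := ⟨g, mem_of_abs_le_const hw
    (g.hasCompactSupport.exists_bound_of_continuous g.continuous).choose_spec⟩
  map_add' _ _ := rfl
  map_smul' _ _ := rfl

/-- A positive functional is tight if it is small on functions dominated by the weight and vanishing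
on a large compact set. -/
def IsTight (L : growthSpace w →ₚ[ℝ] ℝ) : Prop :=
  ∀ ε > 0, ∃ K, IsCompact K ∧ ∀ f : growthSpace w, (∀ z, |f z| ≤ w z) → Set.EqOn f 0 K → |L f| ≤ ε

lemma integrable [MeasurableSpace Z] [OpensMeasurableSpace Z] {γ : Measure Z}
    (hγ : Integrable w γ) (f : growthSpace w) : Integrable f γ :=
  (Asymptotics.isBigO_top.1 f.2).elim fun C hC =>
    (hγ.norm.const_mul C).mono' f.1.continuous.measurable.aestronglyMeasurable (ae_of_all _ hC)

section Cutoff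

lemma IsTight.tendsto_cutoff (hw : ∀ z, 1 ≤ w z) {L : growthSpace w →ₚ[ℝ] ℝ} (hL : IsTight L)
    {E : CompactExhaustion Z} {χ : ℕ → C_c(Z, ℝ)} (hone : ∀ n, Set.EqOn (χ n) 1 (E n))
    (hIcc : ∀ n z, χ n z ∈ Set.Icc 0 1) (f : growthSpace w) :
    Tendsto (fun n => L (ofCompactlySupported hw (f.1 • χ n))) atTop (𝓝 (L f)) := by
  obtain ⟨C, hC, hf⟩ := exists_abs_le hw f
  refine Metric.tendsto_atTop'.2 fun ε hε => ?_
  obtain ⟨K, hK, hLK⟩ := hL (ε / (2 * C)) (by positivity)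
  obtain ⟨N, hN⟩ := E.exists_superset_of_isCompact hK
  refine ⟨N, fun n hn => ?_⟩
  set r : growthSpace w := ofCompactlySupported hw (f.1 • χ n) - f with hr
  have hrz (z : Z) : r z = f z * χ n z - f z := rfl
  have hsmall : |L (C⁻¹ • r)| ≤ ε / (2 * C) := by
    refine hLK _ (fun z => ?_) fun z hz => ?_
    · have : |χ n z - 1| ≤ 1 := abs_le.2 ⟨by linarith [(hIcc n z).1], by linarith [(hIcc n z).2]⟩
      calc |C⁻¹ * r z| = C⁻¹ * (|f z| * |χ n z - 1|) := by
            rw [hrz, ← mul_sub_one, abs_mul, abs_mul, abs_of_pos (inv_pos.2 hC)]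
        _ ≤ C⁻¹ * (C * w z * 1) := by gcongr; exacts [(abs_nonneg _).trans (hf z), hf z]
        _ = w z := by field_simp
    · change C⁻¹ * r z = 0
      rw [hrz, hone n (E.subset hn.le (hN hz)), Pi.one_apply, mul_one, sub_self, mul_zero]
  rw [map_smul, smul_eq_mul, abs_mul, abs_of_pos (inv_pos.2 hC), inv_mul_le_iff₀ hC, hr,
    map_sub] at hsmall
  calc _ ≤ C * (ε / (2 * C)) := hsmall
    _ < ε := by field_simp; linarith

variable [T2Space Z] [LocallyCompactSpace Z]

lemma exists_cutoff (E : CompactExhaustion Z) : ∃ χ : ℕ → C_c(Z, ℝ),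
    (∀ n, Set.EqOn (χ n) 1 (E n)) ∧ ∀ n z, χ n z ∈ Set.Icc 0 1 := by
  choose χ hone hsupp _ hIcc using fun n =>
    exists_continuousMap_one_of_isCompact_subset_isOpen (E.isCompact n) isOpen_univ
      (Set.subset_univ _)
  exact ⟨fun n => ⟨χ n, hsupp n⟩, hone, hIcc⟩

variable [SigmaCompactSpace Z] [MeasurableSpace Z] [BorelSpace Z]

lemma integrable_weight (hw : ∀ z, 1 ≤ w z) {L : growthSpace w →ₚ[ℝ] ℝ} {γ : Measure Z}
    [IsFiniteMeasureOnCompacts γ]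
    (hγ : ∀ g : C_c(Z, ℝ), ∫ z, g z ∂γ = L (ofCompactlySupported hw g)) : Integrable w γ := by
  have hw₀ (z : Z) : 0 ≤ w z := zero_le_one.trans (hw z)
  let E := CompactExhaustion.choice Z
  obtain ⟨χ, hone, hIcc⟩ := exists_cutoff E
  have hcover : AECover γ atTop E :=
    ⟨ae_of_all _ fun z => eventually_atTop.2 ⟨E.find z, fun _ hn => E.mem_iff_find_le.2 hn⟩,
      fun n => (E.isCompact n).measurableSet⟩
  refine hcover.integrable_of_integral_bounded_of_nonneg_ae (L (weight w))
    (fun n => w.continuous.continuousOn.integrableOn_compact (E.isCompact n))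
    (ae_of_all _ hw₀) (Eventually.of_forall fun n => ?_)
  calc ∫ z in E n, w z ∂γ = ∫ z in E n, (w • χ n) z ∂γ :=
        setIntegral_congr_fun (E.isCompact n).measurableSet fun z hz => by simp [hone n hz]
    _ ≤ ∫ z, (w • χ n) z ∂γ := setIntegral_le_integral (w • χ n).integrable
        (ae_of_all _ fun z => mul_nonneg (hw₀ z) (hIcc n z).1)
    _ = L (ofCompactlySupported hw (w • χ n)) := hγ _
    _ ≤ L (weight w) := OrderHomClass.mono L fun z => mul_le_of_le_one_right (hw₀ z) (hIcc n z).2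

theorem IsTight.exists_measure (hw : ∀ z, 1 ≤ w z) {L : growthSpace w →ₚ[ℝ] ℝ} (hL : IsTight L) :
    ∃ γ : Measure Z, Integrable w γ ∧ ∀ f : growthSpace w, ∫ z, f z ∂γ = L f := by
  let γ := RealRMK.rieszMeasure (PositiveLinearMap.mk₀
    (L.toLinearMap ∘ₗ ofCompactlySupported hw)
    fun g hg => map_nonneg L (a := ofCompactlySupported hw g) hg)
  have hγ (g : C_c(Z, ℝ)) : ∫ z, g z ∂γ = L (ofCompactlySupported hw g) :=
    RealRMK.integral_rieszMeasure _ g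
  have hint : Integrable w γ := integrable_weight hw hγ
  let E := CompactExhaustion.choice Z
  obtain ⟨χ, hone, hIcc⟩ := exists_cutoff E
  refine ⟨γ, hint, fun f => tendsto_nhds_unique ?_ (hL.tendsto_cutoff hw hone hIcc f)⟩
  simp only [← hγ]
  refine tendsto_integral_of_dominated_convergence (fun z => |f z|)
    (fun n => (f.1 • χ n).continuous.aestronglyMeasurable) (growthSpace.integrable hint f).abs
    (fun n => ae_of_all _ fun z => ?_) (ae_of_all _ fun z => ?_)
  · rw [CompactlySupportedContinuousMap.smulc_apply, smul_eq_mul, norm_mul,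
      Real.norm_of_nonneg (hIcc n z).1]
    exact mul_le_of_le_one_right (abs_nonneg _) (hIcc n z).2
  · refine tendsto_atTop_of_eventually_const (i₀ := E.find z) fun n hn => ?_
    simp [hone n (E.mem_iff_find_le.2 hn)]

end Cutoff

end growthSpace

end GrowthSpace

section MomentProblem

open ENNReal NNReal

variable {Z : Type*} [TopologicalSpace Z] {w : C(Z, ℝ)} {ι : Type*}

namespace growthSpace

/-- The constant function one, which is dominated by a weight bounded below by one. -/
def one (hw : ∀ z, 1 ≤ w z) : growthSpace w :=
  ⟨1, mem_of_abs_le_const hw (C := 1) fun _ => by simp⟩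

/-- Integration against a measure that integrates the weight. -/
def integral [MeasurableSpace Z] [OpensMeasurableSpace Z] {γ : Measure Z} (hγ : Integrable w γ) :
    growthSpace w →ₗ[ℝ] ℝ where
  toFun f := ∫ z, f z ∂γ
  map_add' f g := integral_add (integrable hγ f) (integrable hγ g)
  map_smul' c _ := integral_const_mul c _

end growthSpace

/-- `γ` solves the moment problem with constraints `∫ h k ≤ a k`. -/
structure IsMomentSolution [MeasurableSpace Z] (h : ι → growthSpace w) (a : ι → ℝ)
    (γ : Measure Z) : Prop where
  isProbabilityMeasure : IsProbabilityMeasure γ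
  integrable_weight : Integrable w γ
  integral_le : ∀ k, ∫ z, h k z ∂γ ≤ a k

/-- The condition dual to solvability of a moment problem: a nonnegative combination of the
constraint functions that is bounded below by `c` has right-hand side at least `c`. -/
def DualFeasible (h : ι → growthSpace w) (a : ι → ℝ) : Prop :=
  ∀ (l : ι →₀ ℝ≥0) (c : ℝ), (∀ z, c ≤ Finsupp.linearCombination ℝ≥0 h l z) →
    c ≤ Finsupp.linearCombination ℝ≥0 a l

/-- The constraints of a moment problem make the mass of the weight outside compact sets small. -/
def MomentTight (h : ι → growthSpace w) (a : ι → ℝ) : Prop :=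
  ∀ ε > 0, ∃ k K, IsCompact K ∧ a k ≤ ε ∧ (∀ z, 0 ≤ h k z) ∧ ∀ z ∉ K, w z ≤ h k z

lemma linearCombination_mono {a b : ι → ℝ} (hab : a ≤ b) (l : ι →₀ ℝ≥0) :
    Finsupp.linearCombination ℝ≥0 a l ≤ Finsupp.linearCombination ℝ≥0 b l :=
  Finset.sum_le_sum fun k _ => smul_le_smul_of_nonneg_left (hab k) ((l k).coe_nonneg)

lemma isClosed_setOf_dualFeasible (h : ι → growthSpace w) : IsClosed {a | DualFeasible h a} := by
  simp only [DualFeasible, Set.ofPred_forall, Finsupp.linearCombination_apply, Finsupp.sum]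
  exact isClosed_iInter fun l => isClosed_iInter fun c => isClosed_iInter fun _ =>
    isClosed_le continuous_const (by fun_prop)

section Measure

variable {h : ι → growthSpace w} {a : ι → ℝ} [MeasurableSpace Z] {γ : Measure Z}

lemma IsMomentSolution.dualFeasible [OpensMeasurableSpace Z] (hγ : IsMomentSolution h a γ) :
    DualFeasible h a := fun l c hc => by
  have := hγ.isProbabilityMeasure
  let I := (growthSpace.integral hγ.integrable_weight).restrictScalars ℝ≥0
  calc c = ∫ _, c ∂γ := by simp
    _ ≤ I (Finsupp.linearCombination ℝ≥0 h l) := integral_mono (integrable_const c)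
      (growthSpace.integrable hγ.integrable_weight _) hc
    _ = Finsupp.linearCombination ℝ≥0 (I ∘ h) l := Finsupp.apply_linearCombination _ _ _ _
    _ ≤ Finsupp.linearCombination ℝ≥0 a l := linearCombination_mono hγ.integral_le l

lemma isMomentSolution_sumElim_iff {ι' : Type*} {h' : ι' → growthSpace w} {a' : ι' → ℝ} :
    IsMomentSolution (Sum.elim h h') (Sum.elim a a') γ ↔
      IsMomentSolution h a γ ∧ ∀ k, ∫ z, h' k z ∂γ ≤ a' k :=
  ⟨fun hγ => ⟨⟨hγ.1, hγ.2, fun k => hγ.3 (.inl k)⟩, fun k => hγ.3 (.inr k)⟩,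
    fun hγ => ⟨hγ.1.1, hγ.1.2, Sum.rec hγ.1.3 hγ.2⟩⟩

lemma isMomentSolution_sumElim_neg_iff :
    IsMomentSolution (Sum.elim h (-h)) (Sum.elim a (-a)) γ ↔
      IsProbabilityMeasure γ ∧ Integrable w γ ∧ ∀ k, ∫ z, h k z ∂γ = a k := by
  have hneg (k : ι) : ∫ z, (-h) k z ∂γ = -∫ z, h k z ∂γ := integral_neg _
  refine ⟨fun hγ => ⟨hγ.1, hγ.2, fun k => (hγ.3 (.inl k)).antisymm ?_⟩,
    fun hγ => ⟨hγ.1, hγ.2.1, Sum.rec (fun k => (hγ.2.2 k).le) fun k => ?_⟩⟩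
  · exact neg_le_neg_iff.1 ((hneg k).ge.trans (hγ.3 (.inr k)))
  · exact ((hneg k).trans (congrArg Neg.neg (hγ.2.2 k))).le

end Measure

section LinearFamily

variable {V : Type*} [AddCommMonoid V] [Module ℝ V] {T : V →ₗ[ℝ] growthSpace w} {α : V →ₗ[ℝ] ℝ}

lemma dualFeasible_comp (hT : ∀ v c, (∀ z, c ≤ T v z) → c ≤ α v) (t : ι → V) :
    DualFeasible (T ∘ t) (α ∘ t) := fun l c hc =>
  have hTl := Finsupp.apply_linearCombination ℝ≥0 (T.restrictScalars ℝ≥0) t l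
  have hαl := Finsupp.apply_linearCombination ℝ≥0 (α.restrictScalars ℝ≥0) t l
  (hT _ c fun z => (hc z).trans_eq (DFunLike.congr_fun (congrArg Subtype.val hTl.symm) z)).trans_eq
    hαl

lemma comp_sumElim_neg_one_smul {W : Type*} [AddCommGroup W] [Module ℝ W] (A : V →ₗ[ℝ] W)
    (t : ι → V) : A ∘ Sum.elim t ((-1 : ℝ) • t) = Sum.elim (A ∘ t) (-(A ∘ t)) := by
  rw [Sum.comp_elim]
  congr 1
  ext k
  simp only [Function.comp_apply, Pi.smul_apply, map_smul, neg_one_smul, Pi.neg_apply]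

lemma dualFeasible_sumElim_neg (hT : ∀ v c, (∀ z, c ≤ T v z) → c ≤ α v) (t : ι → V) :
    DualFeasible (Sum.elim (T ∘ t) (-(T ∘ t))) (Sum.elim (α ∘ t) (-(α ∘ t))) := by
  have h := dualFeasible_comp hT (Sum.elim t ((-1 : ℝ) • t))
  rwa [comp_sumElim_neg_one_smul, comp_sumElim_neg_one_smul] at h

end LinearFamily

section Existence

variable {h : ι → growthSpace w} {a : ι → ℝ}

lemma MomentTight.sumElim (hha : MomentTight h a) {ι' : Type*} (h' : ι' → growthSpace w)
    (a' : ι' → ℝ) : MomentTight (Sum.elim h h') (Sum.elim a a') := fun ε hε =>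
  (hha ε hε).imp' Sum.inl fun _ => id

/-- The slack of each constraint, as an element of the growth space. -/
def momentSlack (hw : ∀ z, 1 ≤ w z) (h : ι → growthSpace w) (a : ι → ℝ) (k : ι) : growthSpace w :=
  a k • growthSpace.one hw - h k

lemma linearCombination_momentSlack (hw : ∀ z, 1 ≤ w z) (l : ι →₀ ℝ≥0) :
    Finsupp.linearCombination ℝ≥0 (momentSlack hw h a) l =
      Finsupp.linearCombination ℝ≥0 a l • growthSpace.one hw -
        Finsupp.linearCombination ℝ≥0 h l := by
  simp only [Finsupp.linearCombination_apply, Finsupp.sum, momentSlack, smul_sub,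
    Finset.sum_sub_distrib, Finset.sum_smul, smul_assoc]

lemma DualFeasible.nonneg_of_linearCombination_le (hw : ∀ z, 1 ≤ w z) (hdual : DualFeasible h a)
    {l : ι →₀ ℝ≥0} {c : ℝ}
    (hl : Finsupp.linearCombination ℝ≥0 (momentSlack hw h a) l ≤ c • growthSpace.one hw) :
    0 ≤ c := by
  rw [linearCombination_momentSlack] at hl
  refine (sub_le_self_iff _).1 <| hdual l (_ - c) fun z => ?_
  have hz : Finsupp.linearCombination ℝ≥0 a l * 1 - Finsupp.linearCombination ℝ≥0 h l z ≤ c * 1 :=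
    hl z
  linarith

lemma MomentTight.exists_linearCombination_le (hw : ∀ z, 1 ≤ w z) (htight : MomentTight h a)
    (f : growthSpace w) : ∃ (l : ι →₀ ℝ≥0) (c : ℝ),
      Finsupp.linearCombination ℝ≥0 (momentSlack hw h a) l ≤ c • growthSpace.one hw + f := by
  obtain ⟨k, K, hK, -, hk, hkK⟩ := htight 1 one_pos
  obtain ⟨C, hC, hf⟩ := growthSpace.exists_abs_le hw f
  lift C to ℝ≥0 using hC.le
  obtain ⟨M, hM⟩ := hK.bddAbove_image w.continuous.continuousOn
  refine ⟨Finsupp.single k C, C * (a k + max M 0), fun z => ?_⟩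
  have hweight : w z ≤ h k z + max M 0 := by
    by_cases hz : z ∈ K
    · exact (hM ⟨z, hz, rfl⟩).trans ((le_max_left M 0).trans (le_add_of_nonneg_left (hk z)))
    · exact (hkK z hz).trans (le_add_of_nonneg_right (le_max_right M 0))
  have hfz := (abs_le.1 (hf z)).1
  rw [Finsupp.linearCombination_single]
  change C * (a k * 1 - h k z) ≤ C * (a k + max M 0) * 1 + f z
  nlinarith [mul_le_mul_of_nonneg_left hweight C.2]

lemma MomentTight.isTight (htight : MomentTight h a) {L : growthSpace w →ₚ[ℝ] ℝ}
    (hL : ∀ k, L (h k) ≤ a k) : growthSpace.IsTight L := fun ε hε => by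
  obtain ⟨k, K, hK, hkε, hk, hkK⟩ := htight ε hε
  refine ⟨K, hK, fun f hf hfK => ?_⟩
  have habs (z : Z) : |f z| ≤ h k z := by
    by_cases hz : z ∈ K
    · rw [hfK hz, Pi.zero_apply, abs_zero]
      exact hk z
    · exact (hf z).trans (hkK z hz)
  have hle : L f ≤ L (h k) := OrderHomClass.mono L fun z => (abs_le.1 (habs z)).2
  have hge : L (-h k) ≤ L f := OrderHomClass.mono L fun z => (abs_le.1 (habs z)).1
  rw [map_neg] at hge
  exact abs_le.2 ⟨by linarith [hL k], by linarith [hL k]⟩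

variable [T2Space Z] [LocallyCompactSpace Z] [SigmaCompactSpace Z] [MeasurableSpace Z]
  [BorelSpace Z]

theorem exists_isMomentSolution_iff_dualFeasible (hw : ∀ z, 1 ≤ w z) (htight : MomentTight h a) :
    (∃ γ, IsMomentSolution h a γ) ↔ DualFeasible h a := by
  refine ⟨fun ⟨γ, hγ⟩ => hγ.dualFeasible, fun hdual => ?_⟩
  obtain ⟨L, hone, hslack⟩ := exists_positiveLinearMap_eq_one
    (fun l c => hdual.nonneg_of_linearCombination_le hw) (htight.exists_linearCombination_le hw)
  have hL (k : ι) : L (h k) ≤ a k := by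
    have := hslack k
    rwa [momentSlack, map_sub, map_smul, hone, smul_eq_mul, mul_one, sub_nonneg] at this
  obtain ⟨γ, hint, hγ⟩ := (htight.isTight hL).exists_measure hw
  refine ⟨γ, ⟨?_⟩, hint, fun k => (hγ (h k)).trans_le (hL k)⟩
  have hmass : γ.real Set.univ = 1 := by
    rw [← hone, ← hγ, ← mul_one (γ.real _)]
    exact (integral_const (1 : ℝ)).symm
  rwa [measureReal_def, toReal_eq_one_iff] at hmass

end Existence

end MomentProblem

section ClosedGenerator

open TopologicalSpace

open scoped BoundedContinuousFunction NNReal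

lemma exists_seq_isClosed_isPiSystem (X : Type*) [TopologicalSpace X]
    [SecondCountableTopology X] : ∃ F : ℕ → Set X, (∀ n, IsClosed (F n)) ∧
      (∃ n, F n = Set.univ) ∧ IsPiSystem (Set.range F) ∧
      borel X = MeasurableSpace.generateFrom (Set.range F) := by
  classical
  let G (s : Finset (countableBasis X)) : Set X := ⋂ U ∈ s, (U : Set X)ᶜ
  obtain ⟨F, hF⟩ := (Set.countable_range G).exists_eq_range (Set.range_nonempty G)
  have hclosed (s : Finset (countableBasis X)) : IsClosed (G s) :=
    isClosed_biInter fun U _ => (isOpen_of_mem_countableBasis U.2).isClosed_compl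
  refine ⟨F, fun n => ?_, hF.le ⟨∅, by simp [G]⟩, ?_, ?_⟩
  · obtain ⟨s, hs⟩ := hF.ge ⟨n, rfl⟩
    exact hs ▸ hclosed s
  · rw [← hF]
    rintro _ ⟨s, rfl⟩ _ ⟨t, rfl⟩ -
    exact ⟨s ∪ t, Finset.iInf_union⟩
  · rw [← hF]
    refine le_antisymm ?_ (MeasurableSpace.generateFrom_le ?_)
    · rw [(isBasis_countableBasis X).borel_eq_generateFrom]
      refine MeasurableSpace.generateFrom_le fun U hU => ?_
      have hG : G {⟨U, hU⟩} = Uᶜ := Finset.iInf_singleton _ _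
      exact .of_compl (hG ▸ MeasurableSpace.measurableSet_generateFrom ⟨_, rfl⟩)
    · rintro _ ⟨s, rfl⟩
      exact .of_compl (MeasurableSpace.measurableSet_generateFrom (hclosed s).isOpen_compl)

variable {X : Type*} [TopologicalSpace X] [SecondCountableTopology X]

variable (X) in
/-- A sequence of closed sets that contains the whole space, is stable under intersections and
generates the Borel sets. -/
def closedGenerator : ℕ → Set X := (exists_seq_isClosed_isPiSystem X).choose

lemma isClosed_closedGenerator (n : ℕ) : IsClosed (closedGenerator X n) :=
  (exists_seq_isClosed_isPiSystem X).choose_spec.1 n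

variable (X) in
lemma exists_closedGenerator_eq_univ : ∃ n, closedGenerator X n = Set.univ :=
  (exists_seq_isClosed_isPiSystem X).choose_spec.2.1

variable (X) in
lemma isPiSystem_range_closedGenerator : IsPiSystem (Set.range (closedGenerator X)) :=
  (exists_seq_isClosed_isPiSystem X).choose_spec.2.2.1

variable (X) in
lemma generateFrom_range_closedGenerator [MeasurableSpace X] [BorelSpace X] :
    ‹MeasurableSpace X› = MeasurableSpace.generateFrom (Set.range (closedGenerator X)) :=
  BorelSpace.measurable_eq.trans (exists_seq_isClosed_isPiSystem X).choose_spec.2.2.2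

variable [HasOuterApproxClosed X]

/-- A countable family of continuous functions approximating the indicators of the sets
`closedGenerator X n`. -/
def testFunction (p : ℕ × ℕ) : X →ᵇ ℝ :=
  ((isClosed_closedGenerator p.1).apprSeq p.2).comp _ NNReal.isometry_coe.lipschitz

variable [MeasurableSpace X] [BorelSpace X] {Ω E : Type*} [MeasurableSpace Ω] {γ : Measure Ω}
  [NormedAddCommGroup E] [NormedSpace ℝ E] {ξ : Ω → X} {u v : Ω → E}

lemma tendsto_integral_testFunction_smul (hξ : Measurable ξ) (hu : Integrable u γ) (n : ℕ) :
    Tendsto (fun m => ∫ ω, testFunction (n, m) (ξ ω) • u ω ∂γ) atTop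
      (𝓝 (∫ ω in ξ ⁻¹' closedGenerator X n, u ω ∂γ)) := by
  have hF := isClosed_closedGenerator (X := X) n
  rw [← integral_indicator (hξ hF.measurableSet)]
  refine tendsto_integral_of_dominated_convergence (fun ω => ‖u ω‖)
    (fun m => (((testFunction (n, m)).continuous.measurable.comp hξ).aestronglyMeasurable).smul
      hu.aestronglyMeasurable) hu.norm (fun m => ae_of_all _ fun ω => ?_) (ae_of_all _ fun ω => ?_)
  · rw [norm_smul]
    exact mul_le_of_le_one_left (norm_nonneg _) <|
      (NNReal.norm_eq _).trans_le (HasOuterApproxClosed.apprSeq_apply_le_one hF m (ξ ω))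
  · have hlim : Tendsto (fun m => testFunction (n, m) (ξ ω) • u ω) atTop
        (𝓝 ((((closedGenerator X n).indicator (fun _ => 1) (ξ ω) : ℝ≥0) : ℝ) • u ω)) :=
      (NNReal.tendsto_coe.2 <| tendsto_pi_nhds.1
        (HasOuterApproxClosed.tendsto_apprSeq hF) (ξ ω)).smul_const _
    convert hlim using 2
    by_cases hω : ξ ω ∈ closedGenerator X n <;> simp [hω]

theorem setIntegral_preimage_eq_of_integral_testFunction_smul_eq (hξ : Measurable ξ)
    (hu : Integrable u γ) (hv : Integrable v γ)
    (huv : ∀ p, ∫ ω, testFunction p (ξ ω) • u ω ∂γ = ∫ ω, testFunction p (ξ ω) • v ω ∂γ)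
    {t : Set X} (ht : MeasurableSet t) :
    ∫ ω in ξ ⁻¹' t, u ω ∂γ = ∫ ω in ξ ⁻¹' t, v ω ∂γ := by
  have hgen (n : ℕ) : ∫ ω in ξ ⁻¹' closedGenerator X n, u ω ∂γ =
      ∫ ω in ξ ⁻¹' closedGenerator X n, v ω ∂γ :=
    tendsto_nhds_unique (tendsto_integral_testFunction_smul hξ hu n)
      (by simpa only [huv] using tendsto_integral_testFunction_smul hξ hv n)
  have huniv : ∫ ω, u ω ∂γ = ∫ ω, v ω ∂γ := by
    obtain ⟨n, hn⟩ := exists_closedGenerator_eq_univ X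
    simpa only [hn, Set.preimage_univ, setIntegral_univ] using hgen n
  induction t, ht using MeasurableSpace.induction_on_inter (generateFrom_range_closedGenerator X)
    (isPiSystem_range_closedGenerator X) with
  | empty => simp only [Set.preimage_empty, setIntegral_empty]
  | basic t ht =>
    obtain ⟨n, rfl⟩ := ht
    exact hgen n
  | compl t ht ih =>
    have hu' := integral_add_compl (hξ ht) hu
    have hv' := integral_add_compl (hξ ht) hv
    rw [← huniv, ← hu', ih] at hv'
    exact (add_left_cancel hv').symm
  | iUnion f hdisj hf ih =>
    have hdisj' : Pairwise (Function.onFun Disjoint fun n => ξ ⁻¹' f n) :=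
      fun _ _ hij => (hdisj hij).preimage ξ
    rw [Set.preimage_iUnion, integral_iUnion (fun i => hξ (hf i)) hdisj' hu.integrableOn,
      integral_iUnion (fun i => hξ (hf i)) hdisj' hv.integrableOn]
    exact tsum_congr ih

lemma ext_of_integral_testFunction_eq {μ ν : Measure X} [IsFiniteMeasure μ] [IsFiniteMeasure ν]
    (hμν : ∀ p, ∫ x, testFunction p x ∂μ = ∫ x, testFunction p x ∂ν) : μ = ν := by
  have hgen (n : ℕ) : μ (closedGenerator X n) = ν (closedGenerator X n) := by
    have hlim (ρ : Measure X) [IsFiniteMeasure ρ] :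
        Tendsto (fun m => ∫ x, testFunction (n, m) x ∂ρ) atTop
          (𝓝 (ρ.real (closedGenerator X n))) := by
      simpa using tendsto_integral_testFunction_smul measurable_id (integrable_const (1 : ℝ)) n
    exact (measureReal_eq_measureReal_iff).1 <|
      tendsto_nhds_unique (hlim μ) (by simpa only [hμν] using hlim ν)
  obtain ⟨n, hn⟩ := exists_closedGenerator_eq_univ X
  exact ext_of_generate_finite _ (generateFrom_range_closedGenerator X)
    (isPiSystem_range_closedGenerator X) (Set.forall_mem_range.2 hgen) (hn ▸ hgen n)

end ClosedGenerator

section OptimalKernel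

open ENNReal

variable {Z : Type*} [MetricSpace Z] {w : C(Z, ℝ)} {ι : Type*}

/-- The bounded continuous approximations from below of the costs `f n`. -/
def costApprox (hw : ∀ z, 1 ≤ w z) (f : ℕ → Z → ℝ≥0∞) (p : ℕ × ℕ) : growthSpace w :=
  ⟨⟨lipschitzApprox (f p.1) p.2, (lipschitzWith_lipschitzApprox _ _).continuous⟩,
    growthSpace.mem_of_abs_le_const hw (C := p.2) fun z => by
      rw [ContinuousMap.coe_mk, abs_of_nonneg (lipschitzApprox_nonneg _ _ _)]
      exact lipschitzApprox_le _ _ _⟩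

/-- The right-hand sides for `costApprox` which express that the costs are bounded by `b`. -/
def costBound (b : ℕ → ℝ≥0∞) (p : ℕ × ℕ) : ℝ :=
  truncateToReal p.2 (b p.1)

lemma continuous_costBound : Continuous costBound :=
  continuous_pi fun p => (continuous_truncateToReal (natCast_ne_top p.2)).comp
    (continuous_apply p.1)

/-- The sequence consisting of the cost `f` and the indicators of the complements of the sets
`closedGenerator Z n`. -/
def costSeq [SecondCountableTopology Z] (f : Z → ℝ≥0∞) : ℕ → Z → ℝ≥0∞
  | 0 => f
  | n + 1 => (closedGenerator Z n)ᶜ.indicator 1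

lemma lowerSemicontinuous_costSeq [SecondCountableTopology Z] {f : Z → ℝ≥0∞}
    (hf : LowerSemicontinuous f) : ∀ n, LowerSemicontinuous (costSeq f n)
  | 0 => hf
  | n + 1 => (isClosed_closedGenerator n).isOpen_compl.lowerSemicontinuous_indicator zero_le_one

variable [MeasurableSpace Z]

/-- The sequences of costs that can simultaneously be undercut by solutions of a moment problem. -/
def attainableCosts (h : ι → growthSpace w) (a : ι → ℝ) (f : ℕ → Z → ℝ≥0∞) : Set (ℕ → ℝ≥0∞) :=
  {b | ∃ γ, IsMomentSolution h a γ ∧ ∀ n, ∫⁻ z, f n z ∂γ ≤ b n}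

variable {h : ι → growthSpace w} {a : ι → ℝ} {f : ℕ → Z → ℝ≥0∞}

lemma isUpperSet_attainableCosts : IsUpperSet (attainableCosts h a f) :=
  fun _ _ hbc ⟨γ, hγ, hb⟩ => ⟨γ, hγ, fun n => (hb n).trans (hbc n)⟩

variable [BorelSpace Z] [SecondCountableTopology Z]

lemma measurable_of_measurable_lintegral_costSeq {S : Type*} [MeasurableSpace S] {f : Z → ℝ≥0∞}
    {γ : S → Measure Z} [∀ θ, IsProbabilityMeasure (γ θ)]
    (hγ : Measurable fun θ n => ∫⁻ z, costSeq f n z ∂γ θ) : Measurable γ := by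
  refine .measure_of_isPiSystem_of_isProbabilityMeasure
    (generateFrom_range_closedGenerator Z) (isPiSystem_range_closedGenerator Z) ?_
  rintro _ ⟨n, rfl⟩
  have hmeas : MeasurableSet (closedGenerator Z n) := (isClosed_closedGenerator n).measurableSet
  have hcompl (θ : S) : γ θ (closedGenerator Z n) = 1 - ∫⁻ z, costSeq f (n + 1) z ∂γ θ := by
    change _ = 1 - ∫⁻ z, (closedGenerator Z n)ᶜ.indicator 1 z ∂γ θ
    rw [lintegral_indicator_one hmeas.compl, prob_compl_eq_one_sub hmeas,
      ENNReal.sub_sub_cancel one_ne_top prob_le_one]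
  simp only [hcompl]
  exact measurable_const.sub (measurable_pi_iff.1 hγ (n + 1))

variable [LocallyCompactSpace Z]

lemma mem_attainableCosts_iff_dualFeasible (hw : ∀ z, 1 ≤ w z) (htight : MomentTight h a)
    (hf : ∀ n, LowerSemicontinuous (f n)) {b : ℕ → ℝ≥0∞} :
    b ∈ attainableCosts h a f ↔
      DualFeasible (Sum.elim h (costApprox hw f)) (Sum.elim a (costBound b)) := by
  rw [← exists_isMomentSolution_iff_dualFeasible hw (htight.sumElim _ _)]
  refine exists_congr fun γ => ?_
  rw [isMomentSolution_sumElim_iff]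
  refine and_congr_right fun hγ => ?_
  have := hγ.isProbabilityMeasure
  simp only [lintegral_le_iff_forall_integral_lipschitzApprox_le (hf _), Prod.forall]
  rfl

lemma top_mem_attainableCosts (hw : ∀ z, 1 ≤ w z) (htight : MomentTight h a)
    (hdual : DualFeasible h a) : ⊤ ∈ attainableCosts h a f :=
  ((exists_isMomentSolution_iff_dualFeasible hw htight).2 hdual).imp
    fun _ hγ => ⟨hγ, fun _ => le_top⟩

lemma isClosed_attainableCosts (hw : ∀ z, 1 ≤ w z) (htight : MomentTight h a)
    (hf : ∀ n, LowerSemicontinuous (f n)) : IsClosed (attainableCosts h a f) := by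
  have hcont : Continuous fun b => Sum.elim a (costBound b) :=
    continuous_pi <| Sum.rec (fun _ => continuous_const)
      fun p => (continuous_apply p).comp continuous_costBound
  rw [Set.ext fun b => mem_attainableCosts_iff_dualFeasible hw htight hf (b := b)]
  exact (isClosed_setOf_dualFeasible (Sum.elim h (costApprox hw f))).preimage hcont

lemma measurableSet_mem_attainableCosts {S : Type*} [MeasurableSpace S] [Countable ι]
    (hw : ∀ z, 1 ≤ w z) {a : S → ι → ℝ} (ha : Measurable a) (htight : ∀ θ, MomentTight h (a θ))
    (hf : ∀ n, LowerSemicontinuous (f n)) {b : S → ℕ → ℝ≥0∞} (hb : Measurable b) :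
    MeasurableSet {θ | b θ ∈ attainableCosts h (a θ) f} := by
  have hmeas : Measurable fun θ => Sum.elim (a θ) (costBound (b θ)) :=
    measurable_pi_lambda _ <| Sum.rec (fun k => (measurable_pi_apply k).comp ha)
      fun p => (measurable_pi_apply p).comp (continuous_costBound.measurable.comp hb)
  simp only [mem_attainableCosts_iff_dualFeasible hw (htight _) hf]
  exact hmeas (isClosed_setOf_dualFeasible _).measurableSet

theorem exists_kernel_isMomentSolution_forall_lintegral_le {S : Type*} [MeasurableSpace S]
    [Countable ι] (hw : ∀ z, 1 ≤ w z) {a : S → ι → ℝ} (ha : Measurable a)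
    (htight : ∀ θ, MomentTight h (a θ)) (hdual : ∀ θ, DualFeasible h (a θ)) {f : Z → ℝ≥0∞}
    (hf : LowerSemicontinuous f) :
    ∃ γ : Kernel S Z, ∀ θ, IsMomentSolution h (a θ) (γ θ) ∧
      ∀ μ, IsMomentSolution h (a θ) μ → ∫⁻ z, f z ∂γ θ ≤ ∫⁻ z, f z ∂μ := by
  have hlsc := lowerSemicontinuous_costSeq hf
  set v : S → ℕ → ℝ≥0∞ := fun θ => lexMin (attainableCosts h (a θ) (costSeq f))
  have hvmeas : Measurable v :=
    measurable_lexMin (fun θ => isClosed_attainableCosts hw (htight θ) hlsc)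
      (fun θ => isUpperSet_attainableCosts)
      (fun θ => top_mem_attainableCosts hw (htight θ) (hdual θ))
      fun b hb => measurableSet_mem_attainableCosts hw ha htight hlsc hb
  choose γ hγ hle using fun θ => lexMin_mem (isClosed_attainableCosts hw (htight θ) hlsc)
      (top_mem_attainableCosts hw (htight θ) (hdual θ))
  have hattain (θ : S) : (fun n => ∫⁻ z, costSeq f n z ∂γ θ) = v θ :=
    eq_lexMin_of_le isUpperSet_attainableCosts ⟨γ θ, hγ θ, fun _ => le_rfl⟩ (hle θ)
  have := fun θ => (hγ θ).isProbabilityMeasure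
  have hmeas : Measurable γ :=
    measurable_of_measurable_lintegral_costSeq (f := f) (by rwa [funext hattain])
  refine ⟨⟨γ, hmeas⟩, fun θ => ⟨hγ θ, fun μ hμ => ?_⟩⟩
  calc ∫⁻ z, f z ∂γ θ = v θ 0 := congrFun (hattain θ) 0
    _ ≤ ∫⁻ z, f z ∂μ := lexMin_zero_le (b := fun n => ∫⁻ z, costSeq f n z ∂μ)
      isUpperSet_attainableCosts ⟨μ, hμ, fun _ => le_rfl⟩

end OptimalKernel

section FirstMoment

open scoped ENNReal

variable (E : Type*) [NormedAddCommGroup E]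

/-- The weight `1 + ‖x‖`, which is integrable against measures with finite first moment. -/
def normWeight : C(E, ℝ) := ⟨fun x => 1 + ‖x‖, by fun_prop⟩

variable {E}

lemma one_le_normWeight (x : E) : 1 ≤ normWeight E x := le_add_of_nonneg_right (norm_nonneg x)

lemma integrable_normWeight [MeasurableSpace E] {μ : Measure E} [IsFiniteMeasure μ]
    (hμ : Integrable (fun x => x) μ) : Integrable (normWeight E) μ :=
  (integrable_const 1).add hμ.norm

/-- A function of linear growth that controls the first moment outside the ball of radius `2n`. -/
def momentTail (n : ℕ) : growthSpace (normWeight E) :=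
  ⟨⟨fun x => 2 * max 0 (‖x‖ - n), by fun_prop⟩, growthSpace.mem_of_abs_le (C := 2) fun x => by
    rw [ContinuousMap.coe_mk, abs_of_nonneg (by positivity)]
    gcongr
    refine max_le (abs_nonneg _) (le_abs.2 (.inl ?_))
    change ‖x‖ - n ≤ 1 + ‖x‖
    linarith [norm_nonneg x, n.cast_nonneg (α := ℝ)]⟩

lemma tendsto_integral_momentTail [MeasurableSpace E] [BorelSpace E] {μ : Measure E}
    (hμ : Integrable (fun x => x) μ) :
    Tendsto (fun n => ∫ x, momentTail n x ∂μ) atTop (𝓝 0) := by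
  rw [← integral_zero E ℝ (μ := μ)]
  refine tendsto_integral_of_dominated_convergence (fun x => 2 * ‖x‖)
    (fun n => (momentTail n).1.continuous.measurable.aestronglyMeasurable)
    (hμ.norm.const_mul 2) (fun n => ae_of_all _ fun x => ?_) (ae_of_all _ fun x => ?_)
  · change ‖2 * max 0 (‖x‖ - n)‖ ≤ _
    rw [Real.norm_of_nonneg (by positivity)]
    gcongr
    exact max_le (norm_nonneg x) (sub_le_self _ n.cast_nonneg)
  · obtain ⟨N, hN⟩ := exists_nat_ge ‖x‖
    refine tendsto_atTop_of_eventually_const (i₀ := N) fun n hn => ?_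
    have hxn : ‖x‖ - n ≤ 0 := sub_nonpos.2 (hN.trans (Nat.cast_le.2 hn))
    change 2 * max 0 (‖x‖ - n) = 0
    rw [max_eq_left hxn, mul_zero]

lemma momentTail_nonneg (n : ℕ) (x : E) : 0 ≤ momentTail n x :=
  mul_nonneg zero_le_two (le_max_left _ _)

lemma normWeight_prod_le_add_momentTail {n : ℕ} {z : E × E}
    (hz : z ∉ Metric.closedBall 0 (2 * n + 1)) :
    normWeight (E × E) z ≤ momentTail n z.1 + momentTail n z.2 := by
  rw [mem_closedBall_zero_iff, not_le] at hz
  have htail (x : E) (hx : ‖x‖ = ‖z‖) : normWeight (E × E) z ≤ momentTail n x := by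
    change 1 + ‖z‖ ≤ 2 * max 0 (‖x‖ - n)
    linarith [le_max_right 0 (‖x‖ - n)]
  rcases max_choice ‖z.1‖ ‖z.2‖ with h | h
  · exact (htail z.1 h.symm).trans (le_add_of_nonneg_right (momentTail_nonneg n z.2))
  · exact (htail z.2 h.symm).trans (le_add_of_nonneg_left (momentTail_nonneg n z.1))

end FirstMoment

section MartingaleConstraints

open scoped BoundedContinuousFunction ENNReal

variable {d : ℕ}

/-- Triples `(φ, ψ, B)` that encode the test function `φ x + ψ y + B x (y - x)`. -/
abbrev MartingaleTest (d : ℕ) : Type :=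
  growthSpace (normWeight (Euc d)) × growthSpace (normWeight (Euc d)) ×
    (Euc d →ᵇ (Euc d →L[ℝ] ℝ))

namespace MartingaleTest

lemma abs_apply_le (τ : MartingaleTest d) : ∃ C, ∀ x y,
    |τ.1 x + τ.2.1 y + τ.2.2 x (y - x)| ≤ C * |normWeight (Euc d × Euc d) (x, y)| := by
  obtain ⟨C₁, hC₁, hφ⟩ := growthSpace.exists_abs_le one_le_normWeight τ.1
  obtain ⟨C₂, hC₂, hψ⟩ := growthSpace.exists_abs_le one_le_normWeight τ.2.1
  refine ⟨C₁ + C₂ + ‖τ.2.2‖ * 2, fun x y => ?_⟩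
  have hx : ‖x‖ ≤ ‖(x, y)‖ := norm_fst_le (x, y)
  have hy : ‖y‖ ≤ ‖(x, y)‖ := norm_snd_le (x, y)
  have hB : |τ.2.2 x (y - x)| ≤ ‖τ.2.2‖ * 2 * (1 + ‖(x, y)‖) :=
    calc |τ.2.2 x (y - x)| ≤ ‖τ.2.2 x‖ * ‖y - x‖ := (τ.2.2 x).le_opNorm _
      _ ≤ ‖τ.2.2‖ * (‖y‖ + ‖x‖) := by
        gcongr
        exacts [τ.2.2.norm_coe_le_norm x, norm_sub_le y x]
      _ ≤ ‖τ.2.2‖ * 2 * (1 + ‖(x, y)‖) := by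
        rw [mul_assoc]
        gcongr
        linarith
  calc |τ.1 x + τ.2.1 y + τ.2.2 x (y - x)|
      ≤ |τ.1 x| + |τ.2.1 y| + |τ.2.2 x (y - x)| := abs_add_three _ _ _
    _ ≤ C₁ * (1 + ‖x‖) + C₂ * (1 + ‖y‖) + ‖τ.2.2‖ * 2 * (1 + ‖(x, y)‖) :=
      add_le_add_three (hφ x) (hψ y) hB
    _ ≤ C₁ * (1 + ‖(x, y)‖) + C₂ * (1 + ‖(x, y)‖) + ‖τ.2.2‖ * 2 * (1 + ‖(x, y)‖) := by gcongr
    _ = (C₁ + C₂ + ‖τ.2.2‖ * 2) * (1 + ‖(x, y)‖) := by ring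
    _ = _ := by
      congr 1
      exact (abs_of_pos (by positivity)).symm

/-- The test function `φ x + ψ y + B x (y - x)` of a triple `(φ, ψ, B)`. -/
def toGrowthSpace : MartingaleTest d →ₗ[ℝ] growthSpace (normWeight (Euc d × Euc d)) where
  toFun τ := ⟨⟨fun z => τ.1 z.1 + τ.2.1 z.2 + τ.2.2 z.1 (z.2 - z.1), by fun_prop⟩,
    growthSpace.mem_of_abs_le fun z => τ.abs_apply_le.choose_spec z.1 z.2⟩
  map_add' σ τ := by
    ext z
    change σ.1 z.1 + τ.1 z.1 + (σ.2.1 z.2 + τ.2.1 z.2) +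
      (σ.2.2 z.1 (z.2 - z.1) + τ.2.2 z.1 (z.2 - z.1)) = _ + _
    exact (congrArg₂ _ (add_add_add_comm _ _ _ _) rfl).trans (add_add_add_comm _ _ _ _)
  map_smul' c τ := by
    ext z
    change c * τ.1 z.1 + c * τ.2.1 z.2 + c * τ.2.2 z.1 (z.2 - z.1) =
      c * (τ.1 z.1 + τ.2.1 z.2 + τ.2.2 z.1 (z.2 - z.1))
    rw [mul_add, mul_add]

variable {P Q : Measure (Euc d)} [IsProbabilityMeasure P] [IsProbabilityMeasure Q]

/-- The value `∫ φ dP + ∫ ψ dQ` that a martingale coupling of `P` and `Q` assigns to the test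
function of `(φ, ψ, B)`. -/
def expectation (hP : FiniteFirstMoment P) (hQ : FiniteFirstMoment Q) : MartingaleTest d →ₗ[ℝ] ℝ :=
  (growthSpace.integral (integrable_normWeight hP)).coprod
    ((growthSpace.integral (integrable_normWeight hQ)).comp (.fst ℝ _ _))

/-- The convex function `y ↦ ⨆ x, -φ x - B x (y - x)`, which separates `-φ` from `ψ` when the test
function of `(φ, ψ, B)` is nonnegative. -/
def convexMajorant (τ : MartingaleTest d) (y : Euc d) : ℝ := ⨆ x, (-τ.1 x - τ.2.2 x (y - x))

section Duality

variable {τ : MartingaleTest d} (hτ : ∀ z, 0 ≤ toGrowthSpace τ z)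

include hτ

lemma neg_sub_le (x y : Euc d) : -τ.1 x - τ.2.2 x (y - x) ≤ τ.2.1 y := by
  have h : 0 ≤ τ.1 x + τ.2.1 y + τ.2.2 x (y - x) := hτ (x, y)
  linarith

lemma bddAbove_range_neg_sub (y : Euc d) :
    BddAbove (Set.range fun x => -τ.1 x - τ.2.2 x (y - x)) :=
  ⟨τ.2.1 y, Set.forall_mem_range.2 fun x => neg_sub_le hτ x y⟩

lemma convexMajorant_le (y : Euc d) : convexMajorant τ y ≤ τ.2.1 y :=
  ciSup_le fun x => neg_sub_le hτ x y

lemma neg_le_convexMajorant (y : Euc d) : -τ.1 y ≤ convexMajorant τ y := by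
  have h : -τ.1 y - τ.2.2 y (y - y) ≤ convexMajorant τ y :=
    le_ciSup (bddAbove_range_neg_sub hτ y) y
  rwa [sub_self, map_zero, sub_zero] at h

lemma convexOn_convexMajorant : ConvexOn ℝ Set.univ (convexMajorant τ) := by
  refine ⟨convex_univ, fun y _ z _ a b ha hb hab => ciSup_le fun x => ?_⟩
  have hy : -τ.1 x - τ.2.2 x (y - x) ≤ convexMajorant τ y :=
    le_ciSup (bddAbove_range_neg_sub hτ y) x
  have hz : -τ.1 x - τ.2.2 x (z - x) ≤ convexMajorant τ z :=
    le_ciSup (bddAbove_range_neg_sub hτ z) x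
  have hsplit : a • y + b • z - x = a • (y - x) + b • (z - x) := by
    rw [smul_sub, smul_sub, sub_add_sub_comm, ← add_smul, hab, one_smul]
  calc -τ.1 x - τ.2.2 x (a • y + b • z - x)
      = (a + b) * -τ.1 x - (a * τ.2.2 x (y - x) + b * τ.2.2 x (z - x)) := by
        rw [hsplit, map_add, map_smul, map_smul, hab, one_mul, smul_eq_mul, smul_eq_mul]
    _ = a * (-τ.1 x - τ.2.2 x (y - x)) + b * (-τ.1 x - τ.2.2 x (z - x)) := by ring
    _ ≤ a • convexMajorant τ y + b • convexMajorant τ z := by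
      simp only [smul_eq_mul]
      gcongr

lemma integrable_convexMajorant {μ : Measure (Euc d)} (hμ : Integrable (normWeight (Euc d)) μ) :
    Integrable (convexMajorant τ) μ := by
  have hlsc : LowerSemicontinuous (convexMajorant τ) :=
    lowerSemicontinuous_ciSup (bddAbove_range_neg_sub hτ) fun x =>
      Continuous.lowerSemicontinuous (by fun_prop)
  exact integrable_of_le_of_le hlsc.measurable.aestronglyMeasurable
    (ae_of_all _ (neg_le_convexMajorant hτ)) (ae_of_all _ (convexMajorant_le hτ))
    (growthSpace.integrable hμ τ.1).neg (growthSpace.integrable hμ τ.2.1)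

lemma expectation_nonneg (hP : FiniteFirstMoment P) (hQ : FiniteFirstMoment Q)
    (hcx : ConvexOrder P Q) : 0 ≤ expectation hP hQ τ := by
  have hwP := integrable_normWeight hP
  have hwQ := integrable_normWeight hQ
  have huP := integrable_convexMajorant hτ hwP
  have huQ := integrable_convexMajorant hτ hwQ
  have hle : -∫ x, τ.1 x ∂P ≤ ∫ y, τ.2.1 y ∂Q :=
    calc -∫ x, τ.1 x ∂P = ∫ x, -τ.1 x ∂P := (integral_neg _).symm
      _ ≤ ∫ x, convexMajorant τ x ∂P :=
        integral_mono (growthSpace.integrable hwP τ.1).neg huP (neg_le_convexMajorant hτ)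
      _ ≤ ∫ y, convexMajorant τ y ∂Q := hcx _ (convexOn_convexMajorant hτ) huP huQ
      _ ≤ ∫ y, τ.2.1 y ∂Q :=
        integral_mono huQ (growthSpace.integrable hwQ τ.2.1) (convexMajorant_le hτ)
  exact neg_le_iff_add_nonneg'.1 hle

end Duality

theorem le_expectation (hP : FiniteFirstMoment P) (hQ : FiniteFirstMoment Q)
    (hcx : ConvexOrder P Q) (τ : MartingaleTest d) (c : ℝ) (hc : ∀ z, c ≤ toGrowthSpace τ z) :
    c ≤ expectation hP hQ τ := by
  let κ : MartingaleTest d := (growthSpace.one one_le_normWeight, 0, 0)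
  have hκ : expectation hP hQ κ = 1 := by
    change ∫ _, (1 : ℝ) ∂P + ∫ _, (0 : ℝ) ∂Q = 1
    simp
  have hnonneg (z : Euc d × Euc d) : 0 ≤ toGrowthSpace (τ + -c • κ) z := by
    have hz : toGrowthSpace κ z = 1 := by
      change (1 : ℝ) + 0 + 0 = 1
      norm_num
    rw [map_add, map_smul]
    change 0 ≤ toGrowthSpace τ z + -c * toGrowthSpace κ z
    rw [hz]
    linarith [hc z]
  have h := expectation_nonneg hnonneg hP hQ hcx
  rw [map_add, map_smul, hκ, smul_eq_mul] at h
  linarith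

end MartingaleTest

section Coupling

variable {P Q : Measure (Euc d)} {γ : Measure (Euc d × Euc d)}

lemma IsCoupling.integrable_fst (hγ : IsCoupling γ P Q) (hP : FiniteFirstMoment P) :
    Integrable Prod.fst γ :=
  Integrable.comp_measurable (g := fun x => x) (hγ.1.symm ▸ hP) measurable_fst

lemma IsCoupling.integrable_snd (hγ : IsCoupling γ P Q) (hQ : FiniteFirstMoment Q) :
    Integrable Prod.snd γ :=
  Integrable.comp_measurable (g := fun y => y) (hγ.2.symm ▸ hQ) measurable_snd

lemma IsCoupling.integral_comp_fst (hγ : IsCoupling γ P Q) {φ : Euc d → ℝ} (hφ : Continuous φ) :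
    ∫ z, φ z.1 ∂γ = ∫ x, φ x ∂P := by
  rw [← hγ.1, integral_map measurable_fst.aemeasurable hφ.aestronglyMeasurable]

lemma IsCoupling.integral_comp_snd (hγ : IsCoupling γ P Q) {ψ : Euc d → ℝ} (hψ : Continuous ψ) :
    ∫ z, ψ z.2 ∂γ = ∫ y, ψ y ∂Q := by
  rw [← hγ.2, integral_map measurable_snd.aemeasurable hψ.aestronglyMeasurable]

lemma integrable_apply_sub (hX : Integrable Prod.fst γ) (hY : Integrable Prod.snd γ)
    (B : Euc d →ᵇ (Euc d →L[ℝ] ℝ)) : Integrable (fun z => B z.1 (z.2 - z.1)) γ :=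
  (ContinuousLinearMap.id ℝ (Euc d →L[ℝ] ℝ)).integrable_of_bilin_of_bdd_left ‖B‖
    (B.continuous.comp continuous_fst).aestronglyMeasurable
    (ae_of_all _ fun z => B.norm_coe_le_norm z.1) (hY.sub hX)

variable [IsFiniteMeasure γ]

lemma IsMartingaleCoupling.integral_apply_sub_eq_zero (hγ : IsMartingaleCoupling γ)
    (hX : Integrable Prod.fst γ) (hY : Integrable Prod.snd γ) (B : Euc d →ᵇ (Euc d →L[ℝ] ℝ)) :
    ∫ z, B z.1 (z.2 - z.1) ∂γ = 0 := by
  have hle : fstSigma d ≤ Prod.instMeasurableSpace := measurable_fst.comap_le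
  have hfst : StronglyMeasurable[fstSigma d] (Prod.fst : Euc d × Euc d → Euc d) :=
    (comap_measurable Prod.fst).stronglyMeasurable
  have hzero : γ[Prod.snd - Prod.fst | fstSigma d] =ᵐ[γ] 0 := by
    refine (condExp_sub hY hX _).trans ?_
    rw [condExp_of_stronglyMeasurable hle hfst hX]
    exact eventuallyEq_iff_sub.1 hγ
  have hpull := condExp_bilin_of_stronglyMeasurable_left (ContinuousLinearMap.id ℝ _)
    (B.continuous.comp_stronglyMeasurable hfst) (integrable_apply_sub hX hY B) (hY.sub hX)
  calc ∫ z, B z.1 (z.2 - z.1) ∂γ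
      = ∫ z, (γ[fun z => B z.1 (z.2 - z.1) | fstSigma d]) z ∂γ :=
        (integral_condExp hle).symm
    _ = ∫ _, (0 : ℝ) ∂γ := integral_congr_ae <| by
      filter_upwards [hpull, hzero] with z hz hz₀
      exact hz.trans ((congrArg (B z.1) hz₀).trans (map_zero _))
    _ = 0 := integral_zero _ _

lemma isMartingaleCoupling_of_integral_testFunction_smul_eq (hX : Integrable Prod.fst γ)
    (hY : Integrable Prod.snd γ)
    (hγ : ∀ p, ∫ z, testFunction p z.1 • z.1 ∂γ = ∫ z, testFunction p z.1 • z.2 ∂γ) :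
    IsMartingaleCoupling γ := by
  refine (ae_eq_condExp_of_forall_setIntegral_eq measurable_fst.comap_le hY
    (fun _ _ _ => hX.integrableOn) ?_
    (comap_measurable Prod.fst).stronglyMeasurable.aestronglyMeasurable).symm
  rintro _ ⟨t, ht, rfl⟩ -
  exact setIntegral_preimage_eq_of_integral_testFunction_smul_eq measurable_fst hX hY hγ ht

variable [IsProbabilityMeasure P] [IsProbabilityMeasure Q]

lemma IsMartingaleCoupling.integral_toGrowthSpace (hγ : IsMartingaleCoupling γ)
    (hPQ : IsCoupling γ P Q) (hP : FiniteFirstMoment P) (hQ : FiniteFirstMoment Q)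
    (τ : MartingaleTest d) : ∫ z, τ.toGrowthSpace z ∂γ = τ.expectation hP hQ := by
  have hX := hPQ.integrable_fst hP
  have hY := hPQ.integrable_snd hQ
  have hφ : Integrable (fun z => τ.1 z.1) γ := Integrable.comp_measurable
    (hPQ.1.symm ▸ growthSpace.integrable (integrable_normWeight hP) τ.1) measurable_fst
  have hψ : Integrable (fun z => τ.2.1 z.2) γ := Integrable.comp_measurable
    (hPQ.2.symm ▸ growthSpace.integrable (integrable_normWeight hQ) τ.2.1) measurable_snd
  have hB := integrable_apply_sub hX hY τ.2.2
  calc ∫ z, τ.toGrowthSpace z ∂γ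
      = ∫ z, τ.1 z.1 ∂γ + ∫ z, τ.2.1 z.2 ∂γ + ∫ z, τ.2.2 z.1 (z.2 - z.1) ∂γ :=
        (integral_add (hφ.add hψ) hB).trans (congrArg (· + _) (integral_add hφ hψ))
    _ = ∫ x, τ.1 x ∂P + ∫ y, τ.2.1 y ∂Q := by
      rw [hγ.integral_apply_sub_eq_zero hX hY, add_zero,
        hPQ.integral_comp_fst τ.1.1.continuous, hPQ.integral_comp_snd τ.2.1.1.continuous]

end Coupling

/-- A bounded continuous function as an element of the growth space of `1 + ‖x‖`. -/
def growthSpace.ofBounded (φ : Euc d →ᵇ ℝ) : growthSpace (normWeight (Euc d)) :=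
  ⟨φ.toContinuousMap, mem_of_abs_le_const one_le_normWeight φ.norm_coe_le_norm⟩

/-- The index set of the countably many equations that define martingale couplings. -/
abbrev MartingaleTestIndex (d : ℕ) : Type := ℕ ⊕ (ℕ × ℕ) ⊕ (ℕ × ℕ) ⊕ ((ℕ × ℕ) × Fin d)

/-- Countably many test functions that characterize martingale couplings: the first ones make the
moment problem tight, the next two families fix the marginals, and the last one is the martingale
property. -/
def martingaleTest : MartingaleTestIndex d → MartingaleTest d
  | .inl n => (momentTail n, momentTail n, 0)
  | .inr (.inl p) => (growthSpace.ofBounded (testFunction p), 0, 0)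
  | .inr (.inr (.inl p)) => (0, growthSpace.ofBounded (testFunction p), 0)
  | .inr (.inr (.inr (p, l))) =>
    (0, 0, testFunction (X := Euc d) p • .const _ (EuclideanSpace.proj l))

variable (d) in
/-- The constraint functions of the moment problem for martingale couplings. Each of the equations
`∫ h dγ = a` is encoded by the two inequalities `∫ h dγ ≤ a` and `∫ -h dγ ≤ -a`. -/
def martingaleConstraint : MartingaleTestIndex d ⊕ MartingaleTestIndex d →
    growthSpace (normWeight (Euc d × Euc d)) :=
  Sum.elim (MartingaleTest.toGrowthSpace ∘ martingaleTest)
    (-(MartingaleTest.toGrowthSpace ∘ martingaleTest))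

section MomentProblem

variable {P Q : Measure (Euc d)} [IsProbabilityMeasure P] [IsProbabilityMeasure Q]

/-- The right-hand sides of the moment problem for martingale couplings of `P` and `Q`. -/
def martingaleBound (hP : FiniteFirstMoment P) (hQ : FiniteFirstMoment Q) :
    MartingaleTestIndex d ⊕ MartingaleTestIndex d → ℝ :=
  Sum.elim (MartingaleTest.expectation hP hQ ∘ martingaleTest)
    (-(MartingaleTest.expectation hP hQ ∘ martingaleTest))

variable {hP : FiniteFirstMoment P} {hQ : FiniteFirstMoment Q}

lemma dualFeasible_martingaleBound (hcx : ConvexOrder P Q) :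
    DualFeasible (martingaleConstraint d) (martingaleBound hP hQ) :=
  dualFeasible_sumElim_neg (MartingaleTest.le_expectation hP hQ hcx) martingaleTest

lemma momentTight_martingaleBound :
    MomentTight (martingaleConstraint d) (martingaleBound hP hQ) := by
  refine MomentTight.sumElim (fun ε hε => ?_) _ _
  have hlim : Tendsto (fun n => ∫ x, momentTail n x ∂P + ∫ y, momentTail n y ∂Q) atTop (𝓝 0) := by
    simpa only [add_zero] using
      (tendsto_integral_momentTail hP).add (tendsto_integral_momentTail hQ)
  obtain ⟨n, hn⟩ := (hlim.eventually_le_const hε).exists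
  have hz (z : Euc d × Euc d) : MartingaleTest.toGrowthSpace (martingaleTest (.inl n)) z =
      momentTail n z.1 + momentTail n z.2 := add_zero _
  refine ⟨.inl n, Metric.closedBall 0 (2 * n + 1), isCompact_closedBall _ _, hn, fun z => ?_,
    fun z hzK => ?_⟩
  · exact (add_nonneg (momentTail_nonneg n z.1) (momentTail_nonneg n z.2)).trans_eq (hz z).symm
  · exact (normWeight_prod_le_add_momentTail hzK).trans_eq (hz z).symm

section Measure

variable {γ : Measure (Euc d × Euc d)} [IsFiniteMeasure γ]
  (hγ : ∀ k, ∫ z, (martingaleTest k).toGrowthSpace z ∂γ = (martingaleTest k).expectation hP hQ)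

include hγ

lemma isCoupling_of_integral_martingaleTest_eq : IsCoupling γ P Q := by
  refine ⟨ext_of_integral_testFunction_eq fun p => ?_, ext_of_integral_testFunction_eq fun p => ?_⟩
  · have h : ∫ z : Euc d × Euc d, (testFunction p z.1 + 0 + 0) ∂γ =
        ∫ x, testFunction p x ∂P + ∫ _, (0 : ℝ) ∂Q := hγ (.inr (.inl p))
    rw [integral_map measurable_fst.aemeasurable (by fun_prop)]
    simpa only [add_zero, integral_zero] using h
  · have h : ∫ z : Euc d × Euc d, (0 + testFunction p z.2 + 0) ∂γ =
        ∫ _, (0 : ℝ) ∂P + ∫ y, testFunction p y ∂Q := hγ (.inr (.inr (.inl p)))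
    rw [integral_map measurable_snd.aemeasurable (by fun_prop)]
    simpa only [add_zero, zero_add, integral_zero] using h

lemma isMartingaleCoupling_of_integral_martingaleTest_eq (hX : Integrable Prod.fst γ)
    (hY : Integrable Prod.snd γ) : IsMartingaleCoupling γ := by
  refine isMartingaleCoupling_of_integral_testFunction_smul_eq hX hY fun p => ?_
  have hint {u : Euc d × Euc d → Euc d} (hu : Integrable u γ) :
      Integrable (fun z => testFunction p z.1 • u z) γ :=
    hu.bdd_smul ‖testFunction p‖
      ((testFunction p).continuous.comp continuous_fst).aestronglyMeasurable
      (ae_of_all _ fun z => (testFunction p).norm_coe_le_norm z.1)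
  have hdiff : Integrable (fun z => testFunction p z.1 • z.2 - testFunction p z.1 • z.1) γ :=
    (hint hY).sub (hint hX)
  rw [eq_comm, ← sub_eq_zero, ← integral_sub (hint hY) (hint hX)]
  ext l
  have h : ∫ z : Euc d × Euc d, (0 + 0 + testFunction p z.1 * (z.2 l - z.1 l)) ∂γ =
      ∫ _, (0 : ℝ) ∂P + ∫ _, (0 : ℝ) ∂Q := hγ (.inr (.inr (.inr (p, l))))
  rw [eval_integral_piLp hdiff.eval_piLp]
  simpa only [PiLp.sub_apply, PiLp.smul_apply, smul_eq_mul, PiLp.zero_apply, mul_sub, add_zero,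
    zero_add, integral_zero] using h

end Measure

theorem isMomentSolution_martingaleBound_iff {γ : Measure (Euc d × Euc d)} :
    IsMomentSolution (martingaleConstraint d) (martingaleBound hP hQ) γ ↔
      IsProbabilityMeasure γ ∧ IsCoupling γ P Q ∧ IsMartingaleCoupling γ := by
  refine isMomentSolution_sumElim_neg_iff.trans <| and_congr_right fun hprob =>
    ⟨fun ⟨_, hγ⟩ => ?_, fun ⟨hPQ, hγ⟩ => ⟨?_, fun k => ?_⟩⟩
  · have hPQ := isCoupling_of_integral_martingaleTest_eq hγ
    exact ⟨hPQ, isMartingaleCoupling_of_integral_martingaleTest_eq hγ (hPQ.integrable_fst hP)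
      (hPQ.integrable_snd hQ)⟩
  · exact integrable_normWeight ((hPQ.integrable_fst hP).prodMk (hPQ.integrable_snd hQ))
  · exact hγ.integral_toGrowthSpace hPQ hP hQ (martingaleTest k)

end MomentProblem

section Kernel

variable {S : Type*} [MeasurableSpace S] {P Q : Kernel S (Euc d)} [IsMarkovKernel P]
  [IsMarkovKernel Q]

lemma measurable_martingaleBound (hP : ∀ θ, FiniteFirstMoment (P θ))
    (hQ : ∀ θ, FiniteFirstMoment (Q θ)) : Measurable fun θ => martingaleBound (hP θ) (hQ θ) := by
  have hτ (τ : MartingaleTest d) : Measurable fun θ => τ.expectation (hP θ) (hQ θ) :=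
    (τ.1.1.continuous.stronglyMeasurable.integral_kernel.measurable).add
      (τ.2.1.1.continuous.stronglyMeasurable.integral_kernel.measurable)
  exact measurable_pi_lambda _ <| Sum.rec (fun _ => hτ _) fun _ => (hτ _).neg

theorem exists_kernel_isMartingaleCoupling_forall_lintegral_le
    (hP : ∀ θ, FiniteFirstMoment (P θ)) (hQ : ∀ θ, FiniteFirstMoment (Q θ))
    (hcx : ∀ θ, ConvexOrder (P θ) (Q θ)) {f : Euc d × Euc d → ℝ≥0∞} (hf : LowerSemicontinuous f) :
    ∃ γ : Kernel S (Euc d × Euc d), ∀ θ,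
      (IsProbabilityMeasure (γ θ) ∧ IsCoupling (γ θ) (P θ) (Q θ) ∧ IsMartingaleCoupling (γ θ)) ∧
        ∀ μ, IsProbabilityMeasure μ → IsCoupling μ (P θ) (Q θ) → IsMartingaleCoupling μ →
          ∫⁻ z, f z ∂γ θ ≤ ∫⁻ z, f z ∂μ := by
  obtain ⟨γ, hγ⟩ := exists_kernel_isMomentSolution_forall_lintegral_le one_le_normWeight
    (measurable_martingaleBound hP hQ) (fun _ => momentTight_martingaleBound)
    (fun θ => dualFeasible_martingaleBound (hcx θ)) hf
  exact ⟨γ, fun θ => ⟨isMomentSolution_martingaleBound_iff.1 (hγ θ).1, fun μ hprob hPQ hμ =>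
    (hγ θ).2 μ (isMomentSolution_martingaleBound_iff.2 ⟨hprob, hPQ, hμ⟩)⟩⟩

end Kernel

end MartingaleConstraints

section Cost

variable {d : ℕ} {c : Euc d × Euc d → EReal} {C : ℝ}

lemma lowerSemicontinuous_erealToENNReal_add (hc : LowerSemicontinuous c) (C : ℝ) :
    LowerSemicontinuous fun p : Euc d × Euc d =>
      erealToENNReal (c p + ((C * (1 + ‖p.1‖ + ‖p.2‖) : ℝ) : EReal)) := by
  have hweight : Continuous fun p : Euc d × Euc d => ((C * (1 + ‖p.1‖ + ‖p.2‖) : ℝ) : EReal) :=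
    continuous_coe_real_ereal.comp (by fun_prop)
  have hsum : LowerSemicontinuous fun p : Euc d × Euc d =>
      c p + ((C * (1 + ‖p.1‖ + ‖p.2‖) : ℝ) : EReal) :=
    hc.add' hweight.lowerSemicontinuous fun p =>
      EReal.continuousAt_add (.inr (EReal.coe_ne_bot _)) (.inr (EReal.coe_ne_top _))
  exact EReal.continuous_toENNReal.comp_lowerSemicontinuous hsum
    fun _ _ => EReal.toENNReal_le_toENNReal

variable {P Q : Measure (Euc d)} {μ ν : Measure (Euc d × Euc d)}

lemma IsCoupling.integral_one_add_norm_add_norm [IsFiniteMeasure P] (hμ : IsCoupling μ P Q)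
    (hP : FiniteFirstMoment P) (hQ : FiniteFirstMoment Q) :
    ∫ p, (1 + ‖p.1‖ + ‖p.2‖) ∂μ = ∫ x, (1 + ‖x‖) ∂P + ∫ y, ‖y‖ ∂Q := by
  have hX : Integrable (fun p => 1 + ‖p.1‖) μ :=
    (show Integrable (fun x => 1 + ‖x‖) (μ.map Prod.fst) from
      hμ.1.symm ▸ integrable_normWeight hP).comp_measurable measurable_fst
  rw [← hμ.integral_comp_fst (by fun_prop), ← hμ.integral_comp_snd (by fun_prop)]
  exact integral_add hX (hμ.integrable_snd hQ).norm

lemma IsCoupling.eCost_le_eCost [IsFiniteMeasure P] (hμ : IsCoupling μ P Q)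
    (hν : IsCoupling ν P Q) (hP : FiniteFirstMoment P) (hQ : FiniteFirstMoment Q)
    (h : ∫⁻ p, erealToENNReal (c p + ((C * (1 + ‖p.1‖ + ‖p.2‖) : ℝ) : EReal)) ∂μ ≤
      ∫⁻ p, erealToENNReal (c p + ((C * (1 + ‖p.1‖ + ‖p.2‖) : ℝ) : EReal)) ∂ν) :
    ECost c C μ ≤ ECost c C ν := by
  unfold ECost
  rw [integral_const_mul, integral_const_mul, hμ.integral_one_add_norm_add_norm hP hQ,
    hν.integral_one_add_norm_add_norm hP hQ]
  exact EReal.sub_le_sub (EReal.coe_ennreal_le_coe_ennreal_iff.2 h) le_rfl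

end Cost

/-- Measurable selection of optimal martingale transport plans: for convex-ordered
kernels P, Q with finite first moments and a lower semicontinuous cost bounded
below by −C(1+‖x‖+‖y‖), there is a kernel of optimal martingale couplings. -/
theorem measurable_optimal_martingale_transport
    (d : ℕ) (hd : 1 ≤ d) {S : Type} [MeasurableSpace S]
    (P Q : Kernel S (Euc d)) [IsMarkovKernel P] [IsMarkovKernel Q]
    (hP : ∀ θ, FiniteFirstMoment (P θ)) (hQ : ∀ θ, FiniteFirstMoment (Q θ))
    (hcx : ∀ θ, ConvexOrder (P θ) (Q θ))
    (c : Euc d × Euc d → EReal) (hc : LowerSemicontinuous c)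
    (C : ℝ) (hbound : ∀ p : Euc d × Euc d, ((-(C * (1 + ‖p.1‖ + ‖p.2‖)) : ℝ) : EReal) ≤ c p) :
    ∃ γ : Kernel S (Euc d × Euc d), IsMarkovKernel γ ∧
      ∀ θ, (IsCoupling (γ θ) (P θ) (Q θ) ∧ IsMartingaleCoupling (γ θ)) ∧
        ∀ μ' : Measure (Euc d × Euc d), IsProbabilityMeasure μ' →
          IsCoupling μ' (P θ) (Q θ) → IsMartingaleCoupling μ' →
          ECost c C (γ θ) ≤ ECost c C μ' := by
  obtain ⟨γ, hγ⟩ := exists_kernel_isMartingaleCoupling_forall_lintegral_le hP hQ hcx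
    (lowerSemicontinuous_erealToENNReal_add hc C)
  refine ⟨γ, ⟨fun θ => (hγ θ).1.1⟩, fun θ => ⟨(hγ θ).1.2, fun μ' hprob hPQ hμ' => ?_⟩⟩
  exact (hγ θ).1.2.1.eCost_le_eCost hPQ (hP θ) (hQ θ) ((hγ θ).2 μ' hprob hPQ hμ')
end
end
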